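/- arXiv:2106.16062 — 2 statements merged into one kernel-verified Lean document; each statement's English description precedes it below -/
import Mathlib

section
/- Let K = ℚ(ζ) be the 7th cyclotomic field with ζ a primitive 7th root of unity. Let g = diag(ζ^4, ζ^2, ζ), let h be the permutation matrix with rows (0,1,0), (0,0,1), (1,0,0), and let i = ((2ζ^4 + 2ζ^2 + 2ζ + 1)/7) · [[ζ-ζ^6, ζ^2-ζ^5, ζ^4-ζ^3],[ζ^2-ζ^5, ζ^4-ζ^3, ζ-ζ^6],[ζ^4-ζ^3, ζ-ζ^6, ζ^2-ζ^5]], all viewed as elements of GL_3(K). Then the subgroup of GL_3(K) generated by g, h, and i has exactly 168 elements. -/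
open scoped MatrixGroups

/-- The 7th cyclotomic field `K = ℚ(ζ)`. -/
noncomputable abbrev K7 : Type := CyclotomicField 7 ℚ

/-- The diagonal matrix `g = diag(ζ⁴, ζ², ζ)`. -/
noncomputable def matG (ζ : K7) : Matrix (Fin 3) (Fin 3) K7 :=
  Matrix.diagonal ![ζ ^ 4, ζ ^ 2, ζ]

/-- The cyclic permutation matrix `h`. -/
noncomputable def matH : Matrix (Fin 3) (Fin 3) K7 :=
  !![0, 1, 0; 0, 0, 1; 1, 0, 0]

/-- The matrix `i`, depending on a primitive 7th root of unity `ζ`. -/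
noncomputable def matI (ζ : K7) : Matrix (Fin 3) (Fin 3) K7 :=
  ((2 * ζ ^ 4 + 2 * ζ ^ 2 + 2 * ζ + 1) / 7) •
    !![ζ - ζ ^ 6, ζ ^ 2 - ζ ^ 5, ζ ^ 4 - ζ ^ 3;
       ζ ^ 2 - ζ ^ 5, ζ ^ 4 - ζ ^ 3, ζ - ζ ^ 6;
       ζ ^ 4 - ζ ^ 3, ζ - ζ ^ 6, ζ ^ 2 - ζ ^ 5]

/-! The matrices `g`, `h`, `i` satisfy the relations of the translation `x ↦ x + 1`, the homothety
`x ↦ 4x` and the inversion `x ↦ -1/x` in `PSL₂(𝔽₇)`. With `B = ⟨h⟩⟨g⟩` of order `21`, these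
relations give the Bruhat decomposition of the generated group as the disjoint union of `B` and
`B i B = B i ⟨g⟩`, where every element of the second cell has a unique expression `b i u` with `b`
in `B` and `u` in `⟨g⟩`; hence the order is `21 + 21 * 7`. The relation `(i g)³ = 1` is the one
with arithmetic content: it holds because the scalar in `i` is a seventh of the quadratic Gauss
sum, whose square is `-7`. -/

section DoubleCoset

variable {G : Type*} [Group G] {B H K : Subgroup G} {a s x y : G}

open DoubleCoset Subgroup

theorem mul_mul_mem_doubleCoset (hx : x ∈ H) (ha : a ∈ doubleCoset s H K) (hy : y ∈ K) :
    x * a * y ∈ doubleCoset s H K := by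
  obtain ⟨h, hh, k, hk, rfl⟩ := mem_doubleCoset.mp ha
  exact mem_doubleCoset.mpr ⟨x * h, mul_mem hx hh, k * y, mul_mem hk hy, by simp only [mul_assoc]⟩

theorem mul_mem_doubleCoset (hx : x ∈ H) (hy : y ∈ doubleCoset s H K) :
    x * y ∈ doubleCoset s H K := by
  simpa only [mul_one] using mul_mul_mem_doubleCoset hx hy K.one_mem

theorem inv_mem_doubleCoset_of_mul_self_mem (hs : s * s ∈ B) (hx : x ∈ doubleCoset s B B) :
    x⁻¹ ∈ doubleCoset s B B := by
  obtain ⟨b, hb, c, hc, rfl⟩ := mem_doubleCoset.mp hx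
  refine mem_doubleCoset.mpr
    ⟨c⁻¹ * (s * s)⁻¹, mul_mem (inv_mem hc) (inv_mem hs), b⁻¹, inv_mem hb, ?_⟩
  group

theorem disjoint_doubleCoset (hH : H ≤ B) (hK : K ≤ B) (hs : s ∉ B) :
    Disjoint (B : Set G) (doubleCoset s H K) := by
  refine Set.disjoint_right.mpr fun x hx hxB ↦ hs ?_
  obtain ⟨h, hh, k, hk, rfl⟩ := mem_doubleCoset.mp hx
  rwa [SetLike.mem_coe, B.mul_mem_cancel_right (hK hk), B.mul_mem_cancel_left (hH hh)] at hxB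

theorem natCard_doubleCoset_of_conj_mem_imp_eq_one (h : ∀ k ∈ K, s * k * s⁻¹ ∈ H → k = 1) :
    Nat.card (doubleCoset s (H : Set G) K) = Nat.card H * Nat.card K := by
  have range_eq : doubleCoset s (H : Set G) K = Set.range fun p : H × K ↦ (p.1 * s * p.2 : G) := by
    ext x
    simp only [mem_doubleCoset, Set.mem_range, Prod.exists, Subtype.exists, SetLike.mem_coe,
      exists_prop, eq_comm]
  have injective : Function.Injective fun p : H × K ↦ (p.1 * s * p.2 : G) := by
    rintro ⟨a, k⟩ ⟨b, l⟩ (e : (a * s * k : G) = b * s * l)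
    have hkl : (k * (l : G)⁻¹ : G) = 1 := by
      refine h _ (mul_mem k.2 (inv_mem l.2)) ?_
      have : s * (k * (l : G)⁻¹ : G) * s⁻¹ = (a : G)⁻¹ * b := by
        rw [eq_inv_mul_iff_mul_eq]
        simp only [← mul_assoc, e, mul_inv_cancel_right]
      exact this ▸ mul_mem (inv_mem a.2) b.2
    obtain rfl : k = l := Subtype.ext (mul_inv_eq_one.mp hkl)
    obtain rfl : a = b := Subtype.ext (mul_right_cancel (mul_right_cancel e))
    rfl
  rw [range_eq, Nat.card_range_of_injective injective, Nat.card_prod]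

theorem natCard_sup_of_disjoint (hnorm : H ≤ normalizer K) (hdisj : Disjoint H K) :
    Nat.card (H ⊔ K : Subgroup G) = Nat.card H * Nat.card K := by
  have coe_sup : ((H ⊔ K : Subgroup G) : Set G) = doubleCoset 1 (H : Set G) K := by
    rw [coe_mul_of_left_le_normalizer_right H K hnorm, doubleCoset, Set.mul_singleton]
    simp only [mul_one, Set.image_id']
  rw [← natCard_doubleCoset_of_conj_mem_imp_eq_one (s := 1), ← coe_sup]
  · rfl
  · intro k hk hkH
    rw [one_mul, inv_one, mul_one] at hkH
    exact disjoint_def.mp hdisj hkH hk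

theorem coe_sup_zpowers_eq_union_doubleCoset (hs : s * s ∈ B)
    (hBs : ∀ b ∈ B, s * b * s ∈ (B ∪ doubleCoset s B B : Set G)) :
    ((B ⊔ zpowers s : Subgroup G) : Set G) = (B : Set G) ∪ doubleCoset s B B := by
  let P : Subgroup G :=
    { carrier := (B : Set G) ∪ doubleCoset s B B
      one_mem' := Or.inl B.one_mem
      inv_mem' := Or.imp inv_mem (inv_mem_doubleCoset_of_mul_self_mem hs)
      mul_mem' := by
        rintro x y (hx | hx) (hy | hy)
        · exact Or.inl (mul_mem hx hy)
        · exact Or.inr (mul_mem_doubleCoset hx hy)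
        · exact Or.inr (by simpa using mul_mul_mem_doubleCoset B.one_mem hx hy)
        · obtain ⟨a, ha, b, hb, rfl⟩ := mem_doubleCoset.mp hx
          obtain ⟨c, hc, d, hd, rfl⟩ := mem_doubleCoset.mp hy
          have e : a * s * b * (c * s * d) = a * (s * (b * c) * s) * d := by
            simp only [mul_assoc]
          rw [e]
          exact (hBs _ (mul_mem hb hc)).imp (fun h ↦ mul_mem (mul_mem ha h) hd)
            (fun h ↦ mul_mul_mem_doubleCoset ha h hd) }
  have sup_le_P : B ⊔ zpowers s ≤ P :=
    sup_le (fun b hb ↦ Or.inl hb) (zpowers_le.mpr (Or.inr (mem_doubleCoset_self B B s)))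
  refine Set.Subset.antisymm sup_le_P (Set.union_subset (le_sup_left (a := B)) fun x hx ↦ ?_)
  obtain ⟨b, hb, c, hc, rfl⟩ := mem_doubleCoset.mp hx
  exact mul_mem (mul_mem (mem_sup_left hb) (mem_sup_right (mem_zpowers s))) (mem_sup_left hc)

end DoubleCoset

/-- A split BN-pair of rank one, given by the Borel subgroup `B`, its unipotent radical `U` and a
representative `s` of the nontrivial Weyl element. The torus `B ∩ s B s⁻¹` is not part of the data:
all that is needed of the factorisation of `B` through it is `B s B = B s U`. -/
structure IsSplitBNPair {G : Type*} [Group G] (B U : Subgroup G) (s : G) : Prop where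
  le : U ≤ B
  notMem : s ∉ B
  mul_self_mem : s * s ∈ B
  doubleCoset_eq : DoubleCoset.doubleCoset s (B : Set G) B = DoubleCoset.doubleCoset s B U
  mul_mul_mem : ∀ u ∈ U, u ≠ 1 → s * u * s ∈ DoubleCoset.doubleCoset s (B : Set G) B

namespace IsSplitBNPair

variable {G : Type*} [Group G] {B U : Subgroup G} {s : G}

open DoubleCoset Subgroup

theorem mul_mul_mem_union (hP : IsSplitBNPair B U s) {b : G} (hb : b ∈ B) :
    s * b * s ∈ (B ∪ doubleCoset s B B : Set G) := by
  have hsb : s * b ∈ doubleCoset s (B : Set G) U :=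
    hP.doubleCoset_eq ▸ mem_doubleCoset.mpr ⟨1, B.one_mem, b, hb, by rw [one_mul]⟩
  obtain ⟨c, hc, u, hu, e⟩ := mem_doubleCoset.mp hsb
  rw [e, mul_assoc, mul_assoc, ← mul_assoc s]
  by_cases hu1 : u = 1
  · rw [hu1, mul_one]
    exact Or.inl (mul_mem hc hP.mul_self_mem)
  · exact Or.inr (mul_mem_doubleCoset hc (hP.mul_mul_mem u hu hu1))

theorem eq_one_of_conj_mem (hP : IsSplitBNPair B U s) {u : G} (hu : u ∈ U)
    (hsu : s * u * s⁻¹ ∈ B) : u = 1 := by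
  by_contra hu1
  have hsus : s * u * s ∈ B := by
    simpa [mul_assoc] using mul_mem hsu hP.mul_self_mem
  exact Set.disjoint_left.mp (disjoint_doubleCoset le_rfl le_rfl hP.notMem) hsus
    (hP.mul_mul_mem u hu hu1)

theorem natCard_sup_zpowers [Finite B] (hP : IsSplitBNPair B U s) :
    Nat.card (B ⊔ zpowers s : Subgroup G) = Nat.card B * (Nat.card U + 1) := by
  have bruhat : ((B ⊔ zpowers s : Subgroup G) : Set G) = (B : Set G) ∪ doubleCoset s B U := by
    rw [coe_sup_zpowers_eq_union_doubleCoset hP.mul_self_mem fun _ ↦ hP.mul_mul_mem_union,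
      hP.doubleCoset_eq]
  have card_cell : (doubleCoset s (B : Set G) U).ncard = Nat.card B * Nat.card U :=
    natCard_doubleCoset_of_conj_mem_imp_eq_one fun _ ↦ hP.eq_one_of_conj_mem
  have finite_cell : (doubleCoset s (B : Set G) U).Finite :=
    ((B : Set G).toFinite.mul (Set.finite_singleton s)).mul ((B : Set G).toFinite.subset hP.le)
  calc Nat.card (B ⊔ zpowers s : Subgroup G)
      = ((B : Set G) ∪ doubleCoset s B U).ncard := by rw [← bruhat]; rfl
    _ = (B : Set G).ncard + (doubleCoset s (B : Set G) U).ncard :=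
        Set.ncard_union_eq (disjoint_doubleCoset le_rfl hP.le hP.notMem) (Set.toFinite _)
          finite_cell
    _ = Nat.card B * (Nat.card U + 1) := by
        rw [card_cell, mul_add_one, add_comm]; rfl

end IsSplitBNPair

/-- Generators of Klein's simple group `PSL₂(𝔽₇)` with their defining relations: `g` corresponds to
the translation `x ↦ x + 1` of the projective line, `h` to the homothety `x ↦ 4x` and `s` to the
inversion `x ↦ -1/x`. -/
structure IsKleinTriple {G : Type*} [Group G] (g h s : G) : Prop where
  orderOf_translation : orderOf g = 7
  orderOf_homothety : orderOf h = 3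
  mul_self : s * s = 1
  homothety_conj : h * g * h⁻¹ = g ^ 4
  inversion_conj : s * h * s⁻¹ = h⁻¹
  mul_pow_three : (s * g) ^ 3 = 1

namespace IsKleinTriple

variable {G : Type*} [Group G] {g h s : G}

open DoubleCoset Subgroup

variable (g h) in
/-- The Borel subgroup attached to `g` and `h`; for `PSL₂(𝔽₇)` it consists of the affine
transformations of the projective line. -/
def borel : Subgroup G := zpowers h ⊔ zpowers g

theorem zpowers_le_normalizer (hT : IsKleinTriple g h s) :
    zpowers h ≤ normalizer (zpowers g : Set G) := by
  have hg : Nat.card (zpowers g) = 7 := by rw [Nat.card_zpowers, hT.orderOf_translation]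
  have : Finite (zpowers g) := Nat.finite_of_card_ne_zero (by lia)
  refine zpowers_le.mpr (mem_normalizer_fintype ?_)
  rintro _ ⟨n, rfl⟩
  refine ⟨4 * n, ?_⟩
  simp only [← conj_zpow, hT.homothety_conj, ← zpow_natCast, ← zpow_mul, Nat.cast_ofNat]

theorem natCard_borel (hT : IsKleinTriple g h s) :
    Nat.card (borel g h) = 21 := by
  have hdisj : Disjoint (zpowers h) (zpowers g) := disjoint_of_coprime_natCard <| by
    rw [Nat.card_zpowers, Nat.card_zpowers, hT.orderOf_homothety, hT.orderOf_translation]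
    decide
  rw [borel, natCard_sup_of_disjoint hT.zpowers_le_normalizer hdisj, Nat.card_zpowers,
    Nat.card_zpowers, hT.orderOf_homothety, hT.orderOf_translation]

theorem inversion_notMem_borel (hT : IsKleinTriple g h s) : s ∉ borel g h := by
  intro hs
  have hs21 : s ^ 21 = 1 := by
    rw [← orderOf_dvd_iff_pow_eq_one, ← hT.natCard_borel]
    exact Subgroup.orderOf_dvd_natCard _ hs
  have hs1 : s = 1 := by
    rwa [pow_succ, show 20 = 2 * 10 from rfl, pow_mul, sq, hT.mul_self, one_pow, one_mul] at hs21
  have hh2 : h ^ 2 = 1 := by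
    rw [sq, mul_eq_one_iff_eq_inv, ← hT.inversion_conj, hs1, one_mul, inv_one, mul_one]
  have : 3 ∣ 2 := hT.orderOf_homothety ▸ orderOf_dvd_of_pow_eq_one hh2
  lia

theorem inversion_mul_zpow (hT : IsKleinTriple g h s) (n : ℤ) : s * h ^ n = h ^ (-n) * s := by
  rw [← mul_inv_eq_iff_eq_mul, ← conj_zpow, hT.inversion_conj, inv_zpow']

theorem doubleCoset_borel_eq (hT : IsKleinTriple g h s) :
    doubleCoset s (borel g h : Set G) (borel g h) = doubleCoset s (borel g h) (zpowers g) := by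
  ext x
  simp only [mem_doubleCoset]
  refine ⟨?_, fun ⟨b, hb, u, hu, e⟩ ↦ ⟨b, hb, u, mem_sup_right hu, e⟩⟩
  rintro ⟨b, hb, c, hc, rfl⟩
  rw [borel, coe_mul_of_left_le_normalizer_right _ _ hT.zpowers_le_normalizer] at hc
  obtain ⟨_, ⟨n, rfl⟩, u, hu, rfl⟩ := Set.mem_mul.mp hc
  refine ⟨b * h ^ (-n), mul_mem hb (mem_sup_left ⟨-n, rfl⟩), u, hu, ?_⟩
  rw [mul_assoc b _ s, ← hT.inversion_mul_zpow]
  simp only [mul_assoc]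

theorem homothety_zpow_conj (hT : IsKleinTriple g h s) (n : ℕ) :
    h ^ n * g * (h ^ n)⁻¹ = g ^ 4 ^ n := by
  induction n with
  | zero => simp only [pow_zero, one_mul, inv_one, mul_one, pow_one]
  | succ n ih =>
    calc h ^ (n + 1) * g * (h ^ (n + 1))⁻¹ = h * (h ^ n * g * (h ^ n)⁻¹) * h⁻¹ := by
          rw [pow_succ', mul_inv_rev]; simp only [mul_assoc]
      _ = g ^ 4 ^ (n + 1) := by
          rw [ih, ← conj_pow, hT.homothety_conj, ← pow_mul, ← pow_succ']

theorem exists_conj_eq_or_conj_eq_inv (hT : IsKleinTriple g h s) {u : G} (hu : u ∈ zpowers g)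
    (hu1 : u ≠ 1) : ∃ n : ℕ, h ^ n * g * (h ^ n)⁻¹ = u ∨ h ^ n * g * (h ^ n)⁻¹ = u⁻¹ := by
  -- The powers of `4` are the nonzero squares modulo `7`, and `-1` is not a square.
  have squares : ∀ m : ZMod 7, m ≠ 0 → ∃ n < 3, 4 ^ n = m ∨ 4 ^ n = -m := by decide
  have zpow_eq : ∀ {n : ℕ} {m : ℤ}, (4 ^ n : ZMod 7) = m → g ^ 4 ^ n = g ^ m := by
    intro n m e
    rw [← zpow_natCast, zpow_eq_zpow_iff_modEq, hT.orderOf_translation,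
      ← ZMod.intCast_eq_intCast_iff]
    exact_mod_cast e
  obtain ⟨m, rfl⟩ := mem_zpowers_iff.mp hu
  have hm : (m : ZMod 7) ≠ 0 := fun hm ↦ hu1 <| by
    rwa [← orderOf_dvd_iff_zpow_eq_one, hT.orderOf_translation, ← ZMod.intCast_zmod_eq_zero_iff_dvd]
  obtain ⟨n, -, e | e⟩ := squares m hm
  · exact ⟨n, Or.inl (by rw [hT.homothety_zpow_conj, zpow_eq e])⟩
  · refine ⟨n, Or.inr ?_⟩
    rw [hT.homothety_zpow_conj, zpow_eq (m := -m) (by rw [e, Int.cast_neg]), zpow_neg]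

theorem inversion_mul_translation_mul_inversion (hT : IsKleinTriple g h s) :
    s * g * s = g⁻¹ * s * g⁻¹ := by
  have e : (s * g * s) * (g * s * g) = 1 := by
    rw [← hT.mul_pow_three, pow_three]
    simp only [mul_assoc]
  rw [mul_eq_one_iff_eq_inv.mp e, mul_inv_rev, mul_inv_rev, inv_eq_of_mul_eq_one_left hT.mul_self,
    mul_assoc]

theorem inversion_mul_mul_mem_doubleCoset (hT : IsKleinTriple g h s) {u : G} (hu : u ∈ zpowers g)
    (hu1 : u ≠ 1) : s * u * s ∈ doubleCoset s (borel g h : Set G) (borel g h) := by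
  have hg : g ∈ borel g h := mem_sup_right (mem_zpowers g)
  have conj_mem (n : ℕ) :
      s * (h ^ n * g * (h ^ n)⁻¹) * s ∈ doubleCoset s (borel g h : Set G) (borel g h) := by
    have hh (k : ℤ) : h ^ k ∈ borel g h := mem_sup_left ⟨k, rfl⟩
    have e : s * (h ^ n * g * (h ^ n)⁻¹) * s
        = (h ^ (-n : ℤ) * g⁻¹) * s * (g⁻¹ * h ^ (n : ℤ)) := by
      have hns := hT.inversion_mul_zpow n
      calc s * (h ^ n * g * (h ^ n)⁻¹) * s
          = (s * h ^ (n : ℤ)) * g * (h ^ (-n : ℤ) * s) := by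
            rw [zpow_neg, zpow_natCast]; simp only [mul_assoc]
        _ = (h ^ (-n : ℤ) * s) * g * (s * h ^ (n : ℤ)) := congrArg₂ (· * g * ·) hns hns.symm
        _ = h ^ (-n : ℤ) * (s * g * s) * h ^ (n : ℤ) := by simp only [mul_assoc]
        _ = _ := by
            rw [hT.inversion_mul_translation_mul_inversion]; simp only [mul_assoc]
    exact mem_doubleCoset.mpr
      ⟨_, mul_mem (hh _) (inv_mem hg), _, mul_mem (inv_mem hg) (hh _), e⟩
  obtain ⟨n, e | e⟩ := hT.exists_conj_eq_or_conj_eq_inv hu hu1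
  · exact e ▸ conj_mem n
  · have hss : s * s ∈ borel g h := hT.mul_self ▸ one_mem _
    have hinv := inv_mem_doubleCoset_of_mul_self_mem hss (e ▸ conj_mem n)
    rwa [mul_inv_rev, mul_inv_rev, inv_inv, inv_eq_of_mul_eq_one_left hT.mul_self, ← mul_assoc]
      at hinv

theorem isSplitBNPair (hT : IsKleinTriple g h s) :
    IsSplitBNPair (borel g h) (zpowers g) s where
  le := le_sup_right
  notMem := hT.inversion_notMem_borel
  mul_self_mem := hT.mul_self ▸ one_mem _
  doubleCoset_eq := hT.doubleCoset_borel_eq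
  mul_mul_mem _ := hT.inversion_mul_mul_mem_doubleCoset

theorem natCard_closure (hT : IsKleinTriple g h s) :
    Nat.card (closure {g, h, s} : Subgroup G) = 168 := by
  have closure_eq : closure {g, h, s} = borel g h ⊔ zpowers s := by
    rw [Set.insert_comm, Set.insert_eq, Set.insert_eq, Subgroup.closure_union,
      Subgroup.closure_union, borel, sup_assoc]
    simp only [zpowers_eq_closure]
  have : Finite (borel g h) :=
    Nat.finite_of_card_ne_zero (by rw [hT.natCard_borel]; decide)
  rw [closure_eq, hT.isSplitBNPair.natCard_sup_zpowers, hT.natCard_borel, Nat.card_zpowers,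
    hT.orderOf_translation]

end IsKleinTriple

section KleinMatrices

open Matrix

section CommRing

variable {R : Type*} [CommRing R]

/-- The diagonal matrix `g`, over an arbitrary ring. -/
def translationMatrix (z : R) : Matrix (Fin 3) (Fin 3) R :=
  diagonal ![z ^ 4, z ^ 2, z]

variable (R) in
/-- The cyclic permutation matrix `h`, over an arbitrary ring. -/
def homothetyMatrix : Matrix (Fin 3) (Fin 3) R :=
  !![0, 1, 0; 0, 0, 1; 1, 0, 0]

/-- The matrix `i` without its scalar factor. -/
def sineMatrix (z : R) : Matrix (Fin 3) (Fin 3) R :=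
  !![z - z ^ 6, z ^ 2 - z ^ 5, z ^ 4 - z ^ 3;
     z ^ 2 - z ^ 5, z ^ 4 - z ^ 3, z - z ^ 6;
     z ^ 4 - z ^ 3, z - z ^ 6, z ^ 2 - z ^ 5]

/-- The quadratic Gauss sum `∑ₐ (a/7) zᵃ`, rewritten using `∑ₐ zᵃ = 0`. -/
def gaussSumSeven (z : R) : R :=
  2 * z ^ 4 + 2 * z ^ 2 + 2 * z + 1

theorem translationMatrix_pow_seven {z : R} (hz : z ^ 7 = 1) : translationMatrix z ^ 7 = 1 := by
  rw [translationMatrix, diagonal_pow, ← diagonal_one]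
  congr 1
  ext k
  fin_cases k <;> simp [pow_right_comm z _ 7, hz]

theorem homothetyMatrix_pow_three : homothetyMatrix R ^ 3 = 1 := by
  simp [homothetyMatrix, pow_three, one_fin_three]

theorem homothetyMatrix_mul_translationMatrix {z : R} (hz : z ^ 7 = 1) :
    homothetyMatrix R * translationMatrix z = translationMatrix z ^ 4 * homothetyMatrix R := by
  have h8 : z ^ 8 = z := by rw [pow_succ, hz, one_mul]
  have h16 : z ^ 16 = z ^ 2 := by rw [pow_mul z 8 2, h8]
  rw [translationMatrix, diagonal_pow, diagonal_fin_three, diagonal_fin_three]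
  simp [homothetyMatrix, ← pow_mul, h8, h16]

theorem sineMatrix_mul_homothetyMatrix (z : R) :
    sineMatrix z * homothetyMatrix R = homothetyMatrix R ^ 2 * sineMatrix z := by
  simp [sineMatrix, homothetyMatrix, sq]

theorem gaussSumSeven_sq {z : R} (hz : z ^ 6 + z ^ 5 + z ^ 4 + z ^ 3 + z ^ 2 + z + 1 = 0) :
    gaussSumSeven z ^ 2 = -7 := by
  rw [gaussSumSeven]
  grind

theorem sineMatrix_mul_self {z : R} (hz : z ^ 6 + z ^ 5 + z ^ 4 + z ^ 3 + z ^ 2 + z + 1 = 0) :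
    sineMatrix z * sineMatrix z = (-7 : R) • 1 := by
  simp only [sineMatrix, one_fin_three, mul_fin_three, smul_of, smul_cons, smul_empty, smul_eq_mul,
    EmbeddingLike.apply_eq_iff_eq, vecCons_inj, and_true]
  grind

theorem sineMatrix_braid {z : R} (hz : z ^ 6 + z ^ 5 + z ^ 4 + z ^ 3 + z ^ 2 + z + 1 = 0) :
    translationMatrix z * (sineMatrix z * translationMatrix z * sineMatrix z) * translationMatrix z
      = -gaussSumSeven z • sineMatrix z := by
  simp only [translationMatrix, diagonal_vec3, sineMatrix, gaussSumSeven, mul_fin_three, smul_of,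
    smul_cons, smul_empty, smul_eq_mul, EmbeddingLike.apply_eq_iff_eq, vecCons_inj, and_true]
  grind

end CommRing

section Field

variable {F : Type*} [Field F] {z : F}

/-- The matrix `i`, over an arbitrary field. -/
def inversionMatrix (z : F) : Matrix (Fin 3) (Fin 3) F :=
  (gaussSumSeven z / 7) • sineMatrix z

theorem inversionMatrix_mul_homothetyMatrix (z : F) :
    inversionMatrix z * homothetyMatrix F = homothetyMatrix F ^ 2 * inversionMatrix z := by
  rw [inversionMatrix, smul_mul_assoc, sineMatrix_mul_homothetyMatrix, mul_smul_comm]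

theorem inversionMatrix_mul_self (h7 : (7 : F) ≠ 0)
    (hz : z ^ 6 + z ^ 5 + z ^ 4 + z ^ 3 + z ^ 2 + z + 1 = 0) :
    inversionMatrix z * inversionMatrix z = 1 := by
  have scalar : gaussSumSeven z / 7 * (gaussSumSeven z / 7) * -7 = 1 := by
    rw [div_mul_div_comm, ← sq, gaussSumSeven_sq hz]
    field_simp
  rw [inversionMatrix, smul_mul_smul_comm, sineMatrix_mul_self hz, smul_smul, scalar, one_smul]

theorem inversionMatrix_braid (h7 : (7 : F) ≠ 0)
    (hz : z ^ 6 + z ^ 5 + z ^ 4 + z ^ 3 + z ^ 2 + z + 1 = 0) :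
    translationMatrix z * (inversionMatrix z * translationMatrix z * inversionMatrix z) *
      translationMatrix z = inversionMatrix z := by
  have scalar : gaussSumSeven z / 7 * (gaussSumSeven z / 7) * -gaussSumSeven z
      = gaussSumSeven z / 7 := by
    rw [div_mul_div_comm, ← sq, gaussSumSeven_sq hz]
    field_simp
  rw [inversionMatrix, smul_mul_assoc, smul_mul_smul_comm, mul_smul_comm, smul_mul_assoc,
    sineMatrix_braid hz, smul_smul, scalar]

theorem inversionMatrix_mul_translationMatrix_pow_three (h7 : (7 : F) ≠ 0)
    (hz : z ^ 6 + z ^ 5 + z ^ 4 + z ^ 3 + z ^ 2 + z + 1 = 0) :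
    (inversionMatrix z * translationMatrix z) ^ 3 = 1 := by
  calc (inversionMatrix z * translationMatrix z) ^ 3
      = inversionMatrix z * (translationMatrix z * (inversionMatrix z * translationMatrix z *
          inversionMatrix z) * translationMatrix z) := by
        rw [pow_three]; simp only [mul_assoc]
    _ = 1 := by rw [inversionMatrix_braid h7 hz, inversionMatrix_mul_self h7 hz]

theorem IsKleinTriple.of_coe_eq (hz : IsPrimitiveRoot z 7) {g h s : GL (Fin 3) F}
    (hg : (g : Matrix (Fin 3) (Fin 3) F) = translationMatrix z)
    (hh : (h : Matrix (Fin 3) (Fin 3) F) = homothetyMatrix F)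
    (hs : (s : Matrix (Fin 3) (Fin 3) F) = inversionMatrix z) : IsKleinTriple g h s := by
  have h7 : (7 : F) ≠ 0 := mod_cast (hz.neZero' (n := 7)).out
  have cyclotomic : z ^ 6 + z ^ 5 + z ^ 4 + z ^ 3 + z ^ 2 + z + 1 = 0 := by
    have := hz.geom_sum_eq_zero (by norm_num)
    simp only [Finset.sum_range_succ, Finset.sum_range_zero] at this
    linear_combination this
  have g_ne_one : g ≠ 1 := by
    rintro rfl
    exact hz.ne_one (by norm_num) (by simpa [translationMatrix] using congr_fun₂ hg.symm 2 2)
  have h_ne_one : h ≠ 1 := by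
    rintro rfl
    simpa [homothetyMatrix] using congr_fun₂ hh 0 0
  have h_pow_three : h ^ 3 = 1 := Units.ext <| by
    rw [Units.val_pow_eq_pow_val, hh, homothetyMatrix_pow_three, Units.val_one]
  have h_inv : h⁻¹ = h ^ 2 := inv_eq_of_mul_eq_one_left (by rw [← pow_succ, h_pow_three])
  exact
    { orderOf_translation := haveI : Fact (Nat.Prime 7) := ⟨by norm_num⟩
        orderOf_eq_prime (Units.ext <| by
          rw [Units.val_pow_eq_pow_val, hg, translationMatrix_pow_seven hz.pow_eq_one,
            Units.val_one]) g_ne_one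
      orderOf_homothety := orderOf_eq_prime h_pow_three h_ne_one
      mul_self := Units.ext <| by
        rw [Units.val_mul, hs, inversionMatrix_mul_self h7 cyclotomic, Units.val_one]
      homothety_conj := mul_inv_eq_iff_eq_mul.mpr <| Units.ext <| by
        rw [Units.val_mul, Units.val_mul, Units.val_pow_eq_pow_val, hg, hh,
          homothetyMatrix_mul_translationMatrix hz.pow_eq_one]
      inversion_conj := mul_inv_eq_iff_eq_mul.mpr <| Units.ext <| by
        rw [h_inv, Units.val_mul, Units.val_mul, Units.val_pow_eq_pow_val, hs, hh,
          inversionMatrix_mul_homothetyMatrix]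
      mul_pow_three := Units.ext <| by
        rw [Units.val_pow_eq_pow_val, Units.val_mul, hs, hg,
          inversionMatrix_mul_translationMatrix_pow_three h7 cyclotomic, Units.val_one] }

theorem stmt12_general (hz : IsPrimitiveRoot z 7) {g h s : GL (Fin 3) F}
    (hg : (g : Matrix (Fin 3) (Fin 3) F) = translationMatrix z)
    (hh : (h : Matrix (Fin 3) (Fin 3) F) = homothetyMatrix F)
    (hs : (s : Matrix (Fin 3) (Fin 3) F) = inversionMatrix z) :
    Nat.card (Subgroup.closure {g, h, s} : Subgroup (GL (Fin 3) F)) = 168 :=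
  (IsKleinTriple.of_coe_eq hz hg hh hs).natCard_closure

end Field

end KleinMatrices

/-- The subgroup of `GL₃(K)` generated by `g`, `h`, and `i` has exactly
168 elements. -/
theorem stmt12 (ζ : K7) (hζ : IsPrimitiveRoot ζ 7)
    (gU hU iU : GL (Fin 3) K7)
    (hg : (gU : Matrix (Fin 3) (Fin 3) K7) = matG ζ)
    (hh : (hU : Matrix (Fin 3) (Fin 3) K7) = matH)
    (hi : (iU : Matrix (Fin 3) (Fin 3) K7) = matI ζ) :
    Nat.card (Subgroup.closure {gU, hU, iU} : Subgroup (GL (Fin 3) K7)) = 168 :=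
  stmt12_general hζ hg hh hi
end

section
/- Let K = ℚ(ζ) be the 7th cyclotomic field, let R = K[x,y,z], let f4 = x^3*y + y^3*z + z^3*x and f6 = x*y^5 + x^5*z - 5*x^2*y^2*z^2 + y*z^5, let I be the ideal of R generated by the three 2×2 minors of the 3×2 Jacobian matrix of (f4, f6), and let k = R/(x,y,z) ≅ K be the residue field of R at the irrelevant maximal ideal. Then the K-vector space dimensions of Tor_i^R(R/I^2, k) for i = 0, 1, 2, 3, 4 are 1, 6, 6, 1, 0 respectively. -/
open MvPolynomial CategoryTheory

/-- The polynomial ring `R = K[x,y,z]`. -/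
noncomputable abbrev R7 : Type := MvPolynomial (Fin 3) K7

/-- The Klein quartic `f4 = x^3*y + y^3*z + z^3*x` in `K[x,y,z]`. -/
noncomputable def f4 : R7 :=
  X 0 ^ 3 * X 1 + X 1 ^ 3 * X 2 + X 2 ^ 3 * X 0

/-- The sextic `f6 = x*y^5 + x^5*z - 5*x^2*y^2*z^2 + y*z^5` in `K[x,y,z]`. -/
noncomputable def f6 : R7 :=
  X 0 * X 1 ^ 5 + X 0 ^ 5 * X 2 - 5 * X 0 ^ 2 * X 1 ^ 2 * X 2 ^ 2 + X 1 * X 2 ^ 5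

/-- The defining ideal of the Klein configuration of points: the ideal
generated by the three `2 × 2` minors of the `3 × 2` Jacobian matrix of
`(f4, f6)`. -/
noncomputable def kleinIdeal : Ideal R7 :=
  Ideal.span
    {pderiv 0 f4 * pderiv 1 f6 - pderiv 0 f6 * pderiv 1 f4,
     pderiv 0 f4 * pderiv 2 f6 - pderiv 0 f6 * pderiv 2 f4,
     pderiv 1 f4 * pderiv 2 f6 - pderiv 1 f6 * pderiv 2 f4}

/-- The irrelevant maximal ideal `(x,y,z)` of `R`. -/
noncomputable def m7 : Ideal R7 := Ideal.span {X 0, X 1, X 2}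

/-- The dimension of `Tor_i^R(R/I², k)` as a `K`-vector space, where the
`K`-module structure is obtained by restriction of scalars along `K → R`. -/
noncomputable def torDimK (i : ℕ) : ℕ :=
  @Module.finrank K7
    (((Tor (ModuleCat R7) i).obj (ModuleCat.of R7 (R7 ⧸ kleinIdeal ^ 2))).obj
      (ModuleCat.of R7 (R7 ⧸ m7))) _ _
    (Module.compHom _ (algebraMap K7 R7))

/-! Let `a` and `b` be the gradients of the two invariants, so that `I` is generated by the entries
of `m = a × b`. Reading `a` and `b` as linear forms, the candidate resolution of `R ⧸ I ^ 2` is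
`0 → R → R³ ⊕ R³ → Sym² R³ → R`, with maps `r ↦ (r b, -r a)`, `(s, t) ↦ a s + b t`, `q ↦ q(m)`.
Its differentials have entries in `(x, y, z)`, so once it is exact it is minimal and the dimensions
of `Tor` are the ranks `1, 6, 6, 1`. Only exactness at `Sym² R³` is subtle. Since the minors are
pairwise coprime, an explicit division shows that `aᵢ ^ 2` carries each form vanishing at `m` into
the image of the middle map. The quartic is smooth, so the ideal of the `aᵢ ^ 2` has radical
`(x, y, z)`, hence depth `3`, and a cokernel with a free resolution of length two has no torsion
along such an ideal. -/

section MinimalResolution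

open Limits MonoidalCategory

universe u v

variable {R : Type u} [CommRing R]

/-- The short complex of chain complexes obtained by tensoring a short complex `S` of modules with
a chain complex `P`. -/
noncomputable def tensorShortComplex (S : ShortComplex (ModuleCat.{u} R))
    (P : ChainComplex (ModuleCat.{u} R) ℕ) : ShortComplex (ChainComplex (ModuleCat.{u} R) ℕ) where
  X₁ := (((tensoringLeft (ModuleCat.{u} R)).obj S.X₁).mapHomologicalComplex _).obj P
  X₂ := (((tensoringLeft (ModuleCat.{u} R)).obj S.X₂).mapHomologicalComplex _).obj P
  X₃ := (((tensoringLeft (ModuleCat.{u} R)).obj S.X₃).mapHomologicalComplex _).obj P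
  f := (NatTrans.mapHomologicalComplex ((tensoringLeft (ModuleCat.{u} R)).map S.f) _).app P
  g := (NatTrans.mapHomologicalComplex ((tensoringLeft (ModuleCat.{u} R)).map S.g) _).app P
  zero := by
    ext i : 1
    exact (comp_whiskerRight S.f S.g (P.X i)).symm.trans
      ((congrArg (· ▷ P.X i) S.zero).trans (MonoidalPreadditive.zero_whiskerRight ..))

variable {Y : ModuleCat.{u} R} (P : ProjectiveResolution Y)

lemma tensorShortComplex_shortExact {S : ShortComplex (ModuleCat.{u} R)} (hS : S.ShortExact) :
    (tensorShortComplex S P.complex).ShortExact := by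
  refine HomologicalComplex.shortExact_of_degreewise_shortExact _ fun i => ?_
  have : Module.Projective R (P.complex.X i) :=
    (IsProjective.iff_projective (P.complex.X i)).2 (P.projective i)
  exact hS.map_of_exact (tensorRight (P.complex.X i))

lemma isZero_homology_tensoringLeft_of_flat (F : ModuleCat.{u} R) [Module.Flat R F] (n : ℕ) :
    IsZero (((((tensoringLeft (ModuleCat.{u} R)).obj F).mapHomologicalComplex _).obj
      P.complex).homology (n + 1)) := by
  rw [← HomologicalComplex.exactAt_iff_isZero_homology]
  exact (P.complex_exactAt_succ n).map (tensorLeft F)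

instance (A : ModuleCat.{u} R) :
    PreservesFiniteColimits ((tensoringLeft (ModuleCat.{u} R)).obj A) :=
  inferInstanceAs (PreservesFiniteColimits (tensorLeft A))

lemma opcyclesMap_comp_fromLeftDerivedZero' {A B : ModuleCat.{u} R} (f : A ⟶ B) :
    HomologicalComplex.opcyclesMap ((NatTrans.mapHomologicalComplex
        ((tensoringLeft (ModuleCat.{u} R)).map f) _).app P.complex) 0 ≫
      P.fromLeftDerivedZero' ((tensoringLeft (ModuleCat.{u} R)).obj B) =
    P.fromLeftDerivedZero' ((tensoringLeft (ModuleCat.{u} R)).obj A) ≫ f ▷ Y := by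
  rw [← cancel_epi (HomologicalComplex.pOpcycles _ _), HomologicalComplex.p_opcyclesMap_assoc,
    ProjectiveResolution.pOpcycles_comp_fromLeftDerivedZero',
    ProjectiveResolution.pOpcycles_comp_fromLeftDerivedZero'_assoc]
  exact (whisker_exchange _ _).symm

lemma homologyMap_tensoringLeft_zero_eq_zero {A B : ModuleCat.{u} R} {f : A ⟶ B}
    (hf : f ▷ Y = 0) :
    HomologicalComplex.homologyMap ((NatTrans.mapHomologicalComplex
      ((tensoringLeft (ModuleCat.{u} R)).map f) _).app P.complex) 0 = 0 := by
  have h := opcyclesMap_comp_fromLeftDerivedZero' P f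
  rw [hf, comp_zero,
    ← zero_comp (f := P.fromLeftDerivedZero' ((tensoringLeft (ModuleCat.{u} R)).obj B)),
    cancel_mono] at h
  rw [← cancel_mono (HomologicalComplex.homologyι _ _), HomologicalComplex.homologyι_naturality, h,
    comp_zero, zero_comp]

-- The connecting map is an isomorphism since its neighbours in the long exact sequence vanish.
lemma nonempty_tor_succ_iso {S : ShortComplex (ModuleCat.{u} R)} (hS : S.ShortExact)
    [Module.Flat R S.X₂] (hf : S.f ▷ Y = 0) (n : ℕ) :
    Nonempty (((Tor (ModuleCat.{u} R) (n + 1)).obj S.X₃).obj Y ≅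
      ((Tor (ModuleCat.{u} R) n).obj S.X₁).obj Y) := by
  let P := projectiveResolution Y
  have h := tensorShortComplex_shortExact P hS
  have h₂ (n : ℕ) : IsZero ((tensorShortComplex S P.complex).X₂.homology (n + 1)) :=
    isZero_homology_tensoringLeft_of_flat P S.X₂ n
  have hf₀ : HomologicalComplex.homologyMap (tensorShortComplex S P.complex).f n = 0 := by
    cases n with
    | zero => exact homologyMap_tensoringLeft_zero_eq_zero P hf
    | succ n => exact (h₂ n).eq_of_tgt _ _
  have hn : (ComplexShape.down ℕ).Rel (n + 1) n := by simp
  have : Mono (h.δ (n + 1) n hn) := h.mono_δ _ _ _ (h₂ n)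
  have : Epi (h.δ (n + 1) n hn) := (h.homology_exact₁ (n + 1) n hn).epi_f hf₀
  have : IsIso (h.δ (n + 1) n hn) := isIso_of_mono_of_epi _
  let e := asIso (h.δ (n + 1) n hn)
  exact ⟨P.isoLeftDerivedObj ((tensoringLeft (ModuleCat.{u} R)).obj S.X₃) (n + 1) ≪≫ e ≪≫
    (P.isoLeftDerivedObj ((tensoringLeft (ModuleCat.{u} R)).obj S.X₁) n).symm⟩

lemma rTensor_eq_zero_of_range_le {L M N : Type*} [AddCommGroup L] [Module R L] [AddCommGroup M]
    [Module R M] [AddCommGroup N] [Module R N] {f : L →ₗ[R] M}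
    (hf : LinearMap.range f ≤ Module.annihilator R N • (⊤ : Submodule R M)) : f.rTensor N = 0 := by
  refine TensorProduct.ext' fun x y => ?_
  rw [LinearMap.rTensor_tmul, LinearMap.zero_apply]
  refine Submodule.smul_induction_on (p := fun z => z ⊗ₜ[R] y = 0) (hf ⟨x, rfl⟩) ?_ ?_
  · intro r hr z _
    rw [TensorProduct.smul_tmul, Module.mem_annihilator.1 hr, TensorProduct.tmul_zero]
  · intro z z' hz hz'
    rw [TensorProduct.add_tmul, hz, hz', add_zero]

variable (R) (K : Type v) [Field K] [Algebra K R]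

/-- The dimension over the field `K` of the `n`-th Tor module of `M` and `N` over the `K`-algebra
`R`. -/
noncomputable def torDim (M N : Type u) [AddCommGroup M] [Module R M] [AddCommGroup N]
    [Module R N] (n : ℕ) : ℕ :=
  Module.finrank K ((ModuleCat.restrictScalars (algebraMap K R)).obj
    (((Tor (ModuleCat R) n).obj (ModuleCat.of R M)).obj (ModuleCat.of R N)))

variable {L F M N : Type u} [AddCommGroup L] [Module R L] [AddCommGroup F] [Module R F]
  [AddCommGroup M] [Module R M] [AddCommGroup N] [Module R N]

lemma torDim_quotient_range_succ [Module.Flat R F] {f : L →ₗ[R] M} {g : M →ₗ[R] F}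
    (hfg : Function.Exact f g)
    (hg : LinearMap.range g ≤ Module.annihilator R N • (⊤ : Submodule R F)) (n : ℕ) :
    torDim R K (F ⧸ LinearMap.range g) N (n + 1) = torDim R K (M ⧸ LinearMap.range f) N n := by
  let ι : (M ⧸ LinearMap.range f) →ₗ[R] F :=
    (LinearMap.range f).liftQ g (LinearMap.range_le_ker_iff.2 hfg.linearMap_comp_eq_zero)
  have hι : LinearMap.range ι = LinearMap.range g := Submodule.range_liftQ _ _ _
  have hιinj : Function.Injective ι :=
    LinearMap.ker_eq_bot.1 (Submodule.ker_liftQ_eq_bot _ _ _ hfg.linearMap_ker_eq.le)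
  let S := ModuleCat.shortComplexOfCompEqZero ι (LinearMap.range g).mkQ
    (by rw [← LinearMap.range_le_ker_iff, hι, Submodule.ker_mkQ])
  have hS : S.ShortExact := ModuleCat.shortComplex_shortExact S
    (LinearMap.exact_iff.2 ((Submodule.ker_mkQ _).trans hι.symm)) hιinj (Submodule.mkQ_surjective _)
  have : Module.Flat R S.X₂ := inferInstanceAs (Module.Flat R F)
  obtain ⟨e⟩ := nonempty_tor_succ_iso (Y := ModuleCat.of R N) hS
    (ModuleCat.hom_ext (rTensor_eq_zero_of_range_le (hι.trans_le hg))) n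
  exact ((ModuleCat.restrictScalars (algebraMap K R)).mapIso e).toLinearEquiv.finrank_eq

lemma torDim_quotient_range_zero [Module.Free R F] [Module.Finite R F] [Nontrivial R]
    [Module K N] [IsScalarTower K R N] {g : M →ₗ[R] F}
    (hg : LinearMap.range g ≤ Module.annihilator R N • (⊤ : Submodule R F)) :
    torDim R K (F ⧸ LinearMap.range g) N 0 = Module.finrank R F * Module.finrank K N := by
  let e : TensorProduct R (F ⧸ LinearMap.range g) N ≃ₗ[R]
      (Module.Free.ChooseBasisIndex R F →₀ N) :=
    (rTensor.equiv N (LinearMap.exact_map_mkQ_range g) (Submodule.mkQ_surjective _)).symm ≪≫ₗ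
      Submodule.quotEquivOfEqBot _
        (by rw [rTensor_eq_zero_of_range_le hg, LinearMap.range_zero]) ≪≫ₗ
      TensorProduct.equivFinsuppOfBasisLeft (Module.Free.chooseBasis R F)
  let T := ((Tor (ModuleCat R) 0).obj (ModuleCat.of R (F ⧸ LinearMap.range g))).obj
    (ModuleCat.of R N)
  let e' : T ≃ₗ[R] (Module.Free.ChooseBasisIndex R F →₀ N) :=
    (((tensoringLeft (ModuleCat R)).obj (ModuleCat.of R (F ⧸ LinearMap.range g)))
      |>.leftDerivedZeroIsoSelf.app (ModuleCat.of R N)).toLinearEquiv ≪≫ₗ e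
  let _ : Module K T := Module.compHom T (algebraMap K R)
  have : IsScalarTower K R T := .of_algebraMap_smul fun _ _ => rfl
  rw [Module.finrank_eq_card_chooseBasisIndex, ← Module.finrank_finsupp]
  exact (e'.restrictScalars K).finrank_eq

theorem torDim_eq_finrank [Nontrivial R] [Module K N] [IsScalarTower K R N] (n : ℕ)
    (F : ℕ → ModuleCat.{u} R) [∀ i, Module.Free R (F i)] [∀ i, Module.Finite R (F i)]
    (d : ∀ i, F (i + 1) →ₗ[R] F i) (hd : ∀ i, Function.Exact (d (i + 1)) (d i))
    (hmin : ∀ i, LinearMap.range (d i) ≤ Module.annihilator R N • (⊤ : Submodule R (F i))) :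
    torDim R K (F 0 ⧸ LinearMap.range (d 0)) N n =
      Module.finrank R (F n) * Module.finrank K N := by
  induction n generalizing F with
  | zero => exact torDim_quotient_range_zero R K (hmin 0)
  | succ n ih =>
    rw [torDim_quotient_range_succ R K (hd 0) (hmin 0)]
    exact ih (fun i => F (i + 1)) (fun i => d (i + 1)) (fun i => hd (i + 1)) fun i => hmin (i + 1)

end MinimalResolution

section Acyclicity

open Abelian RingTheory.Sequence

universe u

variable {R : Type u} [CommRing R]

lemma subsingleton_ext_of_shortExact {S : ShortComplex (ModuleCat.{u} R)} (hS : S.ShortExact)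
    (Q : ModuleCat.{u} R) (n : ℕ) [Subsingleton (Ext Q S.X₂ n)]
    [Subsingleton (Ext Q S.X₁ (n + 1))] :
    Subsingleton (Ext Q S.X₃ n) := by
  refine subsingleton_of_forall_eq 0 fun e => ?_
  obtain ⟨e', rfl⟩ := Ext.covariant_sequence_exact₃ Q hS e rfl (Subsingleton.elim _ 0)
  rw [Subsingleton.elim e' 0, Ext.zero_comp]

lemma mem_range_of_forall_smul_mem_range {L M N : Type u} [AddCommGroup L] [Module R L]
    [AddCommGroup M] [Module R M] [AddCommGroup N] [Module R N] {f : L →ₗ[R] M} {g : M →ₗ[R] N}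
    (hf : Function.Injective f) (hfg : Function.Exact f g) (J : Ideal R)
    [Subsingleton (Ext (ModuleCat.of R (R ⧸ J)) (ModuleCat.of R L) 2)]
    [Subsingleton (Ext (ModuleCat.of R (R ⧸ J)) (ModuleCat.of R M) 1)]
    [Subsingleton (Ext (ModuleCat.of R (R ⧸ J)) (ModuleCat.of R N) 0)]
    {x : N} (hx : ∀ r ∈ J, r • x ∈ LinearMap.range g) : x ∈ LinearMap.range g := by
  let S₁ := ModuleCat.shortComplexOfCompEqZero f g.rangeRestrict
    (by ext y; simpa using hfg.apply_apply_eq_zero y)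
  let S₂ := ModuleCat.shortComplexOfCompEqZero (LinearMap.range g).subtype (LinearMap.range g).mkQ
    (LinearMap.exact_subtype_mkQ _).linearMap_comp_eq_zero
  have hS₁ : S₁.ShortExact := ModuleCat.shortComplex_shortExact _
    (LinearMap.exact_iff.2 (g.ker_rangeRestrict.trans hfg.linearMap_ker_eq))
    hf g.surjective_rangeRestrict
  have hS₂ : S₂.ShortExact := ModuleCat.shortComplex_shortExact _ (LinearMap.exact_subtype_mkQ _)
    (Submodule.subtype_injective _) (Submodule.mkQ_surjective _)
  have : Subsingleton (Ext (ModuleCat.of R (R ⧸ J)) S₂.X₁ 1) :=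
    subsingleton_ext_of_shortExact hS₁ _ 1
  have : Subsingleton (Ext (ModuleCat.of R (R ⧸ J)) S₂.X₃ 0) :=
    subsingleton_ext_of_shortExact hS₂ _ 0
  have : Subsingleton ((R ⧸ J) →ₗ[R] N ⧸ LinearMap.range g) :=
    (Ext.addEquiv₀.trans <|
      ModuleCat.homAddEquiv (M := .of R (R ⧸ J)) (N := S₂.X₃)).symm.subsingleton
  let φ : (R ⧸ J) →ₗ[R] N ⧸ LinearMap.range g :=
    J.liftQ (LinearMap.toSpanSingleton R _ (Submodule.Quotient.mk x)) fun r hr => by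
      simpa [← Submodule.Quotient.mk_smul] using hx r hr
  have hφ : φ (Submodule.Quotient.mk 1) = Submodule.Quotient.mk x :=
    (Submodule.liftQ_apply _ _ _).trans (one_smul R _)
  rw [Subsingleton.elim φ 0] at hφ
  exact (Submodule.Quotient.mk_eq_zero _).1 hφ.symm

lemma isRegular_of_isRegular_self (F : Type u) [AddCommGroup F] [Module R F]
    [Module.FaithfullyFlat R F] {rs : List R} (hrs : IsRegular R rs) : IsRegular F rs where
  toIsWeaklyRegular := ((TensorProduct.lid R F).isWeaklyRegular_congr rs).1
    hrs.toIsWeaklyRegular.isWeaklyRegular_rTensor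
  top_ne_smul := ((Module.FaithfullyFlat.iff_flat_and_proper_ideal R F).1 inferInstance |>.2 _
    (by simpa using hrs.top_ne_smul.symm)).symm

lemma subsingleton_ext_quotient_of_isRegular [IsNoetherianRing R] {J : Ideal R} {rs : List R}
    (hrs : IsRegular R rs) (hJ : ∀ r ∈ rs, r ∈ J.radical) (F : Type u) [AddCommGroup F]
    [Module R F] [Module.FaithfullyFlat R F] [Module.Finite R F] {i : ℕ} (hi : i < rs.length) :
    Subsingleton (Ext (ModuleCat.of R (R ⧸ J)) (ModuleCat.of R F) i) := by
  have hF : IsRegular (ModuleCat.of R F) rs := isRegular_of_isRegular_self F hrs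
  refine ModuleCat.subsingleton_ext_of_exists_isRegular (Ideal.ofList rs) _ ?_ _
    hF.top_ne_smul.symm.lt_top rs (fun r hr => Ideal.subset_span hr) hF i hi
  change Module.support R (R ⧸ J) ⊆ _
  rw [Module.support_eq_zeroLocus, Ideal.annihilator_quotient,
    PrimeSpectrum.zeroLocus_subset_zeroLocus_iff]
  exact Ideal.span_le.2 hJ

end Acyclicity

section TernaryQuadratic

open Matrix

/-- Ternary quadratic forms over `R`: the pair `(u, v)` encodes
`∑ i, (u i * T i ^ 2 + v i * T (i + 1) * T (i + 2))`, with indices mod `3`, so that cyclic shifts of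
the variables act by shifting `u` and `v`. -/
abbrev TernaryQuadratic (R : Type*) : Type _ := (Fin 3 → R) × (Fin 3 → R)

namespace TernaryQuadratic

variable {R : Type*} [CommRing R]

/-- The quadratic form `(∑ i, s i * T i) * (∑ i, t i * T i)`, bilinearly in the coefficient vectors
`s` and `t`. -/
def linearMul : (Fin 3 → R) →ₗ[R] (Fin 3 → R) →ₗ[R] TernaryQuadratic R :=
  LinearMap.mk₂ R
    (fun s t => (fun i => s i * t i, fun i => s (i + 1) * t (i + 2) + s (i + 2) * t (i + 1)))
    (fun _ _ _ => by ext i <;> simp <;> ring) (fun _ _ _ => by ext i <;> simp <;> ring)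
    (fun _ _ _ => by ext i <;> simp <;> ring) (fun _ _ _ => by ext i <;> simp <;> ring)

/-- Evaluation of quadratic forms at the point `m`. -/
def eval (m : Fin 3 → R) : TernaryQuadratic R →ₗ[R] R :=
  LinearMap.coprod (Fintype.linearCombination R fun i => m i ^ 2)
    (Fintype.linearCombination R fun i => m (i + 1) * m (i + 2))

lemma eval_apply (m : Fin 3 → R) (q : TernaryQuadratic R) :
    eval m q = ∑ i, (q.1 i * m i ^ 2 + q.2 i * (m (i + 1) * m (i + 2))) := by
  simp [eval, Fintype.linearCombination_apply, Finset.sum_add_distrib]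

lemma eval_linearMul (m s t : Fin 3 → R) : eval m (linearMul s t) = (s ⬝ᵥ m) * (t ⬝ᵥ m) := by
  simp only [eval_apply, linearMul, LinearMap.mk₂_apply, dotProduct, Fin.sum_univ_three,
    Fin.isValue, zero_add, Fin.reduceAdd]
  ring

lemma range_eval (m : Fin 3 → R) :
    LinearMap.range (eval m) = (Ideal.span (Set.range m) ^ 2 : Ideal R) := by
  apply le_antisymm
  · rintro _ ⟨q, rfl⟩
    have mem (i : Fin 3) : m i ∈ Ideal.span (Set.range m) := Ideal.subset_span ⟨i, rfl⟩
    rw [eval_apply]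
    exact sum_mem fun i _ => add_mem (Ideal.mul_mem_left _ _ (Ideal.pow_mem_pow (mem i) 2))
      (Ideal.mul_mem_left _ _ (sq (Ideal.span (Set.range m)) ▸ Ideal.mul_mem_mul (mem _) (mem _)))
  · rw [sq, Ideal.mul_le]
    intro c hc e he
    obtain ⟨s, rfl⟩ := Ideal.mem_span_range_iff_exists_fun.1 hc
    obtain ⟨t, rfl⟩ := Ideal.mem_span_range_iff_exists_fun.1 he
    exact ⟨linearMul s t, eval_linearMul m s t⟩

lemma linearMul_comm (s t : Fin 3 → R) : linearMul s t = linearMul t s := by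
  ext i <;> simp [linearMul] <;> ring

lemma eq_zero_of_linearMul_eq_zero [NoZeroDivisors R] {s t : Fin 3 → R} (hs : s ≠ 0)
    (h : linearMul s t = 0) : t = 0 := by
  obtain ⟨i, hi⟩ := Function.ne_iff.1 hs
  have hu (j : Fin 3) : s j * t j = 0 := congrFun (congrArg Prod.fst h) j
  have hv (j : Fin 3) : s (j + 1) * t (j + 2) + s (j + 2) * t (j + 1) = 0 :=
    congrFun (congrArg Prod.snd h) j
  have hti : t i = 0 := (mul_eq_zero.1 (hu i)).resolve_left hi
  have hti' (j : Fin 3) (h : s i * t j + s j * t i = 0) : t j = 0 :=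
    (mul_eq_zero.1 (by simpa [hti] using h)).resolve_left hi
  ext j
  have h0 := hv 0
  have h1 := hv 1
  have h2 := hv 2
  fin_cases i <;> fin_cases j <;> first | exact hti | exact hti' _ (by grind)

/-- The first syzygies of the square of the ideal generated by the `2 × 2` minors of the matrix with
columns `a` and `b`, as the map `(s, t) ↦ a * s + b * t` from pairs of linear forms to quadratic
forms. -/
def syzygyMap (a b : Fin 3 → R) : (Fin 3 → R) × (Fin 3 → R) →ₗ[R] TernaryQuadratic R :=
  (linearMul a).coprod (linearMul b)

/-- The second syzygies: the relation `a * b + b * (-a) = 0` between the columns `a` and `b`. -/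
def koszulMap (a b : Fin 3 → R) : R →ₗ[R] (Fin 3 → R) × (Fin 3 → R) :=
  LinearMap.toSpanSingleton R _ (b, -a)

lemma syzygyMap_koszulMap (a b : Fin 3 → R) (r : R) : syzygyMap a b (koszulMap a b r) = 0 := by
  simp [syzygyMap, koszulMap, linearMul_comm a b]

lemma eval_syzygyMap (a b : Fin 3 → R) (w : (Fin 3 → R) × (Fin 3 → R)) :
    eval (a ⨯₃ b) (syzygyMap a b w) = 0 := by
  simp [syzygyMap, eval_linearMul]

lemma koszulMap_injective [IsDomain R] {a b : Fin 3 → R} (ha : a ≠ 0) :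
    Function.Injective (koszulMap a b) := by
  rw [← LinearMap.ker_eq_bot, koszulMap]
  exact LinearMap.ker_toSpanSingleton R fun h => ha (neg_eq_zero.1 (congrArg Prod.snd h))

lemma exists_eq_smul_of_cross_eq_zero [IsDomain R] [DecompositionMonoid R] {a t : Fin 3 → R}
    (ha : a 0 ≠ 0) (hrel : IsRelPrime (a 0) (a 1)) (h : a ⨯₃ t = 0) : ∃ c : R, t = c • a := by
  have h1 : a 2 * t 0 - a 0 * t 2 = 0 := by simpa [cross_apply] using congrFun h 1
  have h2 : a 0 * t 1 - a 1 * t 0 = 0 := by simpa [cross_apply] using congrFun h 2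
  obtain ⟨c, hc⟩ : a 0 ∣ t 0 := hrel.dvd_of_dvd_mul_left ⟨t 1, by linear_combination -h2⟩
  have h1' : t 1 = c * a 1 := mul_left_cancel₀ ha (by linear_combination h2 + a 1 * hc)
  have h2' : t 2 = c * a 2 := mul_left_cancel₀ ha (by linear_combination -h1 + a 2 * hc)
  exact ⟨c, by ext i; fin_cases i <;> simp [hc, h1', h2', mul_comm]⟩

lemma cross_eq_zero_of_syzygyMap_eq_zero [NoZeroDivisors R] {a b s t : Fin 3 → R}
    (hm : ∀ i, (a ⨯₃ b) i ≠ 0) (h : syzygyMap a b (s, t) = 0) : a ⨯₃ t = 0 := by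
  ext i
  -- Evaluate the form `a * s + b * t` at the point `v ⨯₃ a`, where `a` vanishes.
  have key (v : Fin 3 → R) : (v ⬝ᵥ a ⨯₃ b) * (v ⬝ᵥ a ⨯₃ t) = 0 := by
    have h' := congrArg (eval (v ⨯₃ a)) h
    simpa [syzygyMap, eval_linearMul, ← triple_product_permutation v a,
      triple_product_permutation _ v a] using h'
  simpa [hm i] using key (Pi.single i 1)

lemma exact_koszulMap_syzygyMap [IsDomain R] [DecompositionMonoid R] {a b : Fin 3 → R}
    (hm : ∀ i, (a ⨯₃ b) i ≠ 0) (ha : a 0 ≠ 0) (hrel : IsRelPrime (a 0) (a 1)) :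
    Function.Exact (koszulMap a b) (syzygyMap a b) := by
  rintro ⟨s, t⟩
  refine ⟨fun h => ?_, fun ⟨r, hr⟩ => hr ▸ syzygyMap_koszulMap a b r⟩
  obtain ⟨c, rfl⟩ := exists_eq_smul_of_cross_eq_zero ha hrel
    (cross_eq_zero_of_syzygyMap_eq_zero hm h)
  have hs : linearMul a (s + c • b) = 0 := by
    simpa [syzygyMap, linearMul_comm b a] using h
  have hs' := eq_zero_of_linearMul_eq_zero (fun h0 => ha (congrFun h0 0)) hs
  exact ⟨-c, by simp [koszulMap, eq_neg_of_add_eq_zero_left hs']⟩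

/-- The cyclic shift `j ↦ i + j` of coordinates. -/
def shift (i : Fin 3) : (Fin 3 → R) ≃ₗ[R] (Fin 3 → R) :=
  LinearEquiv.funCongrLeft R R (Equiv.addLeft i)

lemma shift_apply (i : Fin 3) (a : Fin 3 → R) (j : Fin 3) : shift i a j = a (i + j) := rfl

lemma shift_cross (i : Fin 3) (a b : Fin 3 → R) : shift i a ⨯₃ shift i b = shift i (a ⨯₃ b) := by
  ext j
  fin_cases i <;> fin_cases j <;> simp [shift_apply, cross_apply]

lemma eval_shift (i : Fin 3) (m : Fin 3 → R) (q : TernaryQuadratic R) :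
    eval (shift i m) ((shift i).prodCongr (shift i) q) = eval m q := by
  simp only [eval_apply, LinearEquiv.prodCongr_apply, shift_apply, ← add_assoc]
  exact Equiv.sum_comp (Equiv.addLeft i) fun j => q.1 j * m j ^ 2 + q.2 j * (m (j + 1) * m (j + 2))

lemma syzygyMap_shift (i : Fin 3) (a b : Fin 3 → R) (w : (Fin 3 → R) × (Fin 3 → R)) :
    syzygyMap (shift i a) (shift i b) ((shift i).prodCongr (shift i) w) =
      (shift i).prodCongr (shift i) (syzygyMap a b w) := by
  ext j <;> simp [syzygyMap, linearMul, shift_apply, add_assoc]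

lemma exists_eq_mul_of_binaryQuadratic_eq_zero [IsDomain R] [DecompositionMonoid R] {p q A B C : R}
    (hp : p ≠ 0) (hpq : IsRelPrime p q) (h : A * p ^ 2 + B * (p * q) + C * q ^ 2 = 0) :
    ∃ s t, A = q * s ∧ B = -(p * s) - q * t ∧ C = p * t := by
  obtain ⟨t, rfl⟩ : p ∣ C := hpq.dvd_of_dvd_mul_left <| hpq.dvd_of_dvd_mul_left
    ⟨-(A * p + B * q), by linear_combination h⟩
  have h' : A * p + B * q + t * q ^ 2 = 0 := mul_left_cancel₀ hp (by linear_combination h)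
  obtain ⟨s, hs⟩ : p ∣ B + t * q := hpq.dvd_of_dvd_mul_left ⟨-A, by linear_combination h'⟩
  exact ⟨-s, t, mul_left_cancel₀ hp (by linear_combination h' - q * hs),
    by linear_combination hs, rfl⟩

-- Modulo `a · T`, the form `a 0 ^ 2 * q` is a binary form in `T 1`, `T 2`. It vanishes at
-- `(m 1, m 2)`, so it is divisible by `m 2 * T 1 - m 1 * T 2 = a 0 * (b · T) - b 0 * (a · T)`.
lemma sq_smul_mem_range_syzygyMap_zero [IsDomain R] [DecompositionMonoid R] {a b : Fin 3 → R}
    (hm : (a ⨯₃ b) 1 ≠ 0) (hrel : IsRelPrime ((a ⨯₃ b) 1) ((a ⨯₃ b) 2)) {q : TernaryQuadratic R}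
    (hq : eval (a ⨯₃ b) q = 0) : a 0 ^ 2 • q ∈ LinearMap.range (syzygyMap a b) := by
  obtain ⟨u, v⟩ := q
  set m := a ⨯₃ b with hmab
  have ham : a 0 * m 0 + a 1 * m 1 + a 2 * m 2 = 0 := by
    simpa [dotProduct, Fin.sum_univ_three] using dot_self_cross a b
  have hq : u 0 * m 0 ^ 2 + v 0 * (m 1 * m 2) + (u 1 * m 1 ^ 2 + v 1 * (m 2 * m 0)) +
      (u 2 * m 2 ^ 2 + v 2 * (m 0 * m 1)) = 0 := by
    simpa [eval_apply, Fin.sum_univ_three] using hq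
  obtain ⟨s, t, hA, hB, hC⟩ := exists_eq_mul_of_binaryQuadratic_eq_zero
    (A := a 0 ^ 2 * u 1 - a 0 * a 1 * v 2 + a 1 ^ 2 * u 0)
    (B := a 0 ^ 2 * v 0 - a 0 * a 2 * v 2 - a 0 * a 1 * v 1 + 2 * a 1 * a 2 * u 0)
    (C := a 0 ^ 2 * u 2 - a 0 * a 2 * v 1 + a 2 ^ 2 * u 0) hm hrel (by
      linear_combination a 0 ^ 2 * hq -
        (u 0 * (a 0 * m 0 - a 1 * m 1 - a 2 * m 2) + a 0 * v 2 * m 1 + a 0 * v 1 * m 2) * ham)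
  refine ⟨(![a 0 * u 0, a 0 * v 2 - a 1 * u 0 - b 0 * s, a 0 * v 1 - a 2 * u 0 + b 0 * t],
    ![0, a 0 * s, -(a 0 * t)]), ?_⟩
  have hm1 : m 1 = a 2 * b 0 - a 0 * b 2 := by simp [hmab, cross_apply]
  have hm2 : m 2 = a 0 * b 1 - a 1 * b 0 := by simp [hmab, cross_apply]
  rw [hm2] at hA
  rw [hm1, hm2] at hB
  rw [hm1] at hC
  ext i <;> fin_cases i <;> simp [syzygyMap, linearMul]
  · ring
  · linear_combination -hA
  · linear_combination -hC
  · linear_combination -hB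
  · ring
  · ring

lemma sq_smul_mem_range_syzygyMap [IsDomain R] [DecompositionMonoid R] {a b : Fin 3 → R}
    (i : Fin 3) (hm : (a ⨯₃ b) (i + 1) ≠ 0)
    (hrel : IsRelPrime ((a ⨯₃ b) (i + 1)) ((a ⨯₃ b) (i + 2))) {q : TernaryQuadratic R}
    (hq : eval (a ⨯₃ b) q = 0) : a i ^ 2 • q ∈ LinearMap.range (syzygyMap a b) := by
  obtain ⟨w, hw⟩ := sq_smul_mem_range_syzygyMap_zero (a := shift i a) (b := shift i b)
    (by rwa [shift_cross]) (by rwa [shift_cross]) (by rw [shift_cross, eval_shift, hq])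
  obtain ⟨w, rfl⟩ := ((shift i).prodCongr (shift i)).surjective w
  rw [syzygyMap_shift, ← map_smul, shift_apply, add_zero] at hw
  exact ⟨w, LinearEquiv.injective _ hw⟩

universe u

lemma exact_syzygyMap_eval {R : Type u} [CommRing R] [IsDomain R] [IsNoetherianRing R]
    [DecompositionMonoid R] {a b : Fin 3 → R} (hm : ∀ i, (a ⨯₃ b) i ≠ 0)
    (hmrel : ∀ i, IsRelPrime ((a ⨯₃ b) (i + 1)) ((a ⨯₃ b) (i + 2))) (ha : a 0 ≠ 0)
    (hrel : IsRelPrime (a 0) (a 1)) {rs : List R} (hrs : RingTheory.Sequence.IsRegular R rs)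
    (hlen : 2 < rs.length) (hrad : ∀ r ∈ rs, r ∈ (Ideal.span (Set.range a)).radical) :
    Function.Exact (syzygyMap a b) (eval (a ⨯₃ b)) := by
  intro q
  refine ⟨fun hq => ?_, fun ⟨w, hw⟩ => hw ▸ eval_syzygyMap a b w⟩
  let J : Ideal R := Ideal.span (Set.range fun i => a i ^ 2)
  have hradJ : ∀ r ∈ rs, r ∈ J.radical := by
    suffices Ideal.span (Set.range a) ≤ J.radical from
      fun r hr => (Ideal.radical_le_radical_iff.2 this) (hrad r hr)
    rw [Ideal.span_le]
    rintro _ ⟨i, rfl⟩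
    exact ⟨2, Ideal.subset_span ⟨i, rfl⟩⟩
  have hext₂ := subsingleton_ext_quotient_of_isRegular hrs hradJ R hlen
  have hext₁ := subsingleton_ext_quotient_of_isRegular hrs hradJ ((Fin 3 → R) × (Fin 3 → R))
    (one_lt_two.trans hlen)
  have hext₀ := subsingleton_ext_quotient_of_isRegular hrs hradJ (TernaryQuadratic R)
    (two_pos.trans hlen)
  refine mem_range_of_forall_smul_mem_range (koszulMap_injective fun h => ha (congrFun h 0))
    (exact_koszulMap_syzygyMap hm ha hrel) J fun r hr => ?_
  induction hr using Submodule.span_induction with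
  | mem r hr =>
    obtain ⟨i, rfl⟩ := hr
    exact sq_smul_mem_range_syzygyMap i (hm _) (hmrel i) hq
  | zero => simp
  | add r s _ _ hr hs => exact add_smul r s q ▸ add_mem hr hs
  | smul c r _ hr => exact smul_assoc c r q ▸ Submodule.smul_mem _ c hr

lemma mem_smul_top_of_forall_mem {R ι : Type*} [CommRing R] [Finite ι] {I : Ideal R} {s : ι → R}
    (hs : ∀ i, s i ∈ I) : s ∈ I • (⊤ : Submodule R (ι → R)) := by
  cases nonempty_fintype ι
  classical
  rw [pi_eq_sum_univ' s]
  exact sum_mem fun i _ => Submodule.smul_mem_smul (hs i) trivial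

lemma range_eval_le {I : Ideal R} {m : Fin 3 → R} (hm : ∀ i, m i ∈ I) :
    LinearMap.range (eval m) ≤ I • ⊤ := by
  rw [range_eval, smul_eq_mul, Ideal.mul_top]
  exact (Ideal.pow_le_self two_ne_zero).trans (Ideal.span_le.2 (Set.range_subset_iff.2 hm))

lemma range_syzygyMap_le {I : Ideal R} {a b : Fin 3 → R} (ha : ∀ i, a i ∈ I) (hb : ∀ i, b i ∈ I) :
    LinearMap.range (syzygyMap a b) ≤ I • ⊤ := by
  rintro _ ⟨⟨s, t⟩, rfl⟩
  exact add_mem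
    (I.smul_top_le_comap_smul_top (linearMul.flip s) (mem_smul_top_of_forall_mem ha))
    (I.smul_top_le_comap_smul_top (linearMul.flip t) (mem_smul_top_of_forall_mem hb))

lemma range_koszulMap_le {I : Ideal R} {a b : Fin 3 → R} (ha : ∀ i, a i ∈ I) (hb : ∀ i, b i ∈ I) :
    LinearMap.range (koszulMap a b) ≤ I • ⊤ := by
  rw [koszulMap, LinearMap.range_toSpanSingleton, Submodule.span_singleton_le_iff_mem]
  have hb' := I.smul_top_le_comap_smul_top (LinearMap.inl R (Fin 3 → R) (Fin 3 → R))
    (mem_smul_top_of_forall_mem hb)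
  have ha' := I.smul_top_le_comap_smul_top (LinearMap.inr R (Fin 3 → R) (Fin 3 → R))
    (mem_smul_top_of_forall_mem ha)
  convert Submodule.sub_mem _ (Submodule.mem_comap.1 hb') (Submodule.mem_comap.1 ha') using 1
  simp

section Resolution

variable (R : Type u) [CommRing R]

/-- The terms `R`, `Sym² R³`, `R³ ⊕ R³`, `R`, `0`, … of the free resolution of `R ⧸ I ^ 2`, for `I`
generated by the `2 × 2` minors of a `3 × 2` matrix. -/
noncomputable def resolutionTerm : ℕ → ModuleCat.{u} R
  | 0 => .of R R
  | 1 => .of R (TernaryQuadratic R)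
  | 2 => .of R ((Fin 3 → R) × (Fin 3 → R))
  | 3 => .of R R
  | _ + 4 => .of R PUnit.{u + 1}

instance : ∀ i, Module.Free R (resolutionTerm R i)
  | 0 | 3 => inferInstanceAs (Module.Free R R)
  | 1 | 2 => inferInstanceAs (Module.Free R ((Fin 3 → R) × (Fin 3 → R)))
  | _ + 4 => inferInstanceAs (Module.Free R PUnit.{u + 1})

instance : ∀ i, Module.Finite R (resolutionTerm R i)
  | 0 | 3 => inferInstanceAs (Module.Finite R R)
  | 1 | 2 => inferInstanceAs (Module.Finite R ((Fin 3 → R) × (Fin 3 → R)))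
  | _ + 4 => inferInstanceAs (Module.Finite R PUnit.{u + 1})

lemma finrank_resolutionTerm [Nontrivial R] :
    ∀ i, Module.finrank R (resolutionTerm R i) = [1, 6, 6, 1].getD i 0
  | 0 | 3 => Module.finrank_self R
  | 1 | 2 => by
    change Module.finrank R ((Fin 3 → R) × (Fin 3 → R)) = 6
    simp
  | _ + 4 => Module.finrank_zero_of_subsingleton (M := PUnit.{u + 1})

variable {R}

/-- The differentials of the free resolution of `R ⧸ I ^ 2`, for `I` generated by the `2 × 2` minors
of the matrix with columns `a` and `b`. -/
noncomputable def resolutionMap (a b : Fin 3 → R) :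
    ∀ i, resolutionTerm R (i + 1) →ₗ[R] resolutionTerm R i
  | 0 => eval (a ⨯₃ b)
  | 1 => syzygyMap a b
  | 2 => koszulMap a b
  | _ + 3 => 0

lemma exact_resolutionMap [IsDomain R] [IsNoetherianRing R]
    [DecompositionMonoid R] {a b : Fin 3 → R} (hm : ∀ i, (a ⨯₃ b) i ≠ 0)
    (hmrel : ∀ i, IsRelPrime ((a ⨯₃ b) (i + 1)) ((a ⨯₃ b) (i + 2))) (ha : a 0 ≠ 0)
    (hrel : IsRelPrime (a 0) (a 1)) {rs : List R} (hrs : RingTheory.Sequence.IsRegular R rs)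
    (hlen : 2 < rs.length) (hrad : ∀ r ∈ rs, r ∈ (Ideal.span (Set.range a)).radical) :
    ∀ i, Function.Exact (resolutionMap a b (i + 1)) (resolutionMap a b i)
  | 0 => exact_syzygyMap_eval (R := R) hm hmrel ha hrel hrs hlen hrad
  | 1 => exact_koszulMap_syzygyMap (R := R) hm ha hrel
  | 2 => (LinearMap.exact_zero_iff_injective PUnit.{u + 1} (koszulMap a b)).2
    (koszulMap_injective fun h => ha (congrFun h 0))
  | _ + 3 => fun x => iff_of_true rfl ⟨0, (Subsingleton.elim (α := PUnit.{u + 1}) x _).symm⟩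

lemma range_resolutionMap_le {I : Ideal R} {a b : Fin 3 → R} (ha : ∀ i, a i ∈ I)
    (hb : ∀ i, b i ∈ I) : ∀ i, LinearMap.range (resolutionMap a b i) ≤ I • ⊤
  | 0 => range_eval_le (R := R) fun i => by
    fin_cases i <;> exact sub_mem (I.mul_mem_right _ (ha _)) (I.mul_mem_right _ (ha _))
  | 1 => range_syzygyMap_le (R := R) ha hb
  | 2 => range_koszulMap_le (R := R) ha hb
  | _ + 3 => (LinearMap.range_zero (τ₁₂ := RingHom.id R)).trans_le bot_le

theorem torDim_quotient_span_cross_sq (K : Type*) [Field K] [Algebra K R] [IsDomain R]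
    [IsNoetherianRing R] [DecompositionMonoid R] {a b : Fin 3 → R} (hm : ∀ i, (a ⨯₃ b) i ≠ 0)
    (hmrel : ∀ i, IsRelPrime ((a ⨯₃ b) (i + 1)) ((a ⨯₃ b) (i + 2))) (ha : a 0 ≠ 0)
    (hrel : IsRelPrime (a 0) (a 1)) {rs : List R} (hrs : RingTheory.Sequence.IsRegular R rs)
    (hlen : 2 < rs.length) (hrad : ∀ r ∈ rs, r ∈ (Ideal.span (Set.range a)).radical)
    {N : Type u} [AddCommGroup N] [Module R N] [Module K N] [IsScalarTower K R N]
    (haN : ∀ i, a i ∈ Module.annihilator R N) (hbN : ∀ i, b i ∈ Module.annihilator R N) (n : ℕ) :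
    torDim R K (R ⧸ Ideal.span (Set.range (a ⨯₃ b)) ^ 2) N n =
      [1, 6, 6, 1].getD n 0 * Module.finrank K N := by
  rw [← range_eval, ← finrank_resolutionTerm R n]
  exact torDim_eq_finrank R K n (resolutionTerm R) (resolutionMap a b)
    (exact_resolutionMap hm hmrel ha hrel hrs hlen hrad) (range_resolutionMap_le haN hbN)

end Resolution

end TernaryQuadratic

end TernaryQuadratic

section Polynomial

open RingTheory.Sequence

variable {σ A F : Type*} [CommRing A] [Field F]

lemma isSMulRegular_X_quotient_span_image {s : Set σ} {i : σ} (hi : i ∉ s) :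
    IsSMulRegular (MvPolynomial σ A ⧸ (Ideal.span (X '' s) : Ideal (MvPolynomial σ A)))
      (X i : MvPolynomial σ A) := by
  refine isSMulRegular_quotient_iff_mem_of_smul_mem _ _ |>.2 fun p hp => ?_
  rw [mem_ideal_span_X_image] at hp ⊢
  intro m hm
  obtain ⟨j, hj, hmj⟩ := hp (Finsupp.single i 1 + m) (by simpa [support_X_mul] using hm)
  have hij : i ≠ j := fun h => hi (h ▸ hj)
  exact ⟨j, hj, by simpa [Finsupp.single_apply, hij] using hmj⟩

lemma isWeaklyRegular_map_X {l : List σ} (hl : l.Nodup) :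
    IsWeaklyRegular (MvPolynomial σ A) (l.map (X : σ → MvPolynomial σ A)) := by
  induction l using List.reverseRecOn with
  | nil => simp
  | append_singleton l i ih =>
    obtain ⟨hl, -, hi⟩ := List.nodup_append'.1 hl
    have hspan : (Ideal.ofList (l.map (X : σ → MvPolynomial σ A)) • ⊤ : Ideal (MvPolynomial σ A)) =
        Ideal.span (X '' {j | j ∈ l}) := by
      rw [smul_eq_mul, Ideal.mul_top, Ideal.ofList]
      congr 1
      ext
      simp
    rw [List.map_append, isWeaklyRegular_append_iff, List.map_singleton,
      isWeaklyRegular_singleton_iff]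
    refine ⟨ih hl, ?_⟩
    rw [hspan]
    exact isSMulRegular_X_quotient_span_image fun h => hi h (by simp)

lemma mem_idealOfVars_iff {p : MvPolynomial σ A} :
    p ∈ idealOfVars σ A ↔ constantCoeff p = 0 := by
  rw [← pow_one (idealOfVars σ A), mem_pow_idealOfVars_iff']
  simp [constantCoeff_eq, Finsupp.degree_eq_zero_iff]

lemma isRegular_map_X [Nontrivial A] {l : List σ} (hl : l.Nodup) :
    IsRegular (MvPolynomial σ A) (l.map (X : σ → MvPolynomial σ A)) where
  toIsWeaklyRegular := isWeaklyRegular_map_X hl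
  top_ne_smul h := by
    have hle : Ideal.ofList (l.map X) ≤ idealOfVars σ A := Ideal.span_mono fun p hp => by
      obtain ⟨i, -, rfl⟩ := List.mem_map.1 hp
      exact ⟨i, rfl⟩
    have h1 : (1 : MvPolynomial σ A) ∈ Ideal.ofList (l.map X) := by
      rw [← Ideal.mul_top (Ideal.ofList _), ← smul_eq_mul, ← h]
      trivial
    simpa [mem_idealOfVars_iff] using hle h1

lemma finrank_quotient_idealOfVars :
    Module.finrank F (MvPolynomial σ F ⧸ idealOfVars σ F) = 1 := by
  have hker : idealOfVars σ F = RingHom.ker (aeval 0 : MvPolynomial σ F →ₐ[F] F) := by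
    ext p
    rw [mem_idealOfVars_iff, RingHom.mem_ker, aeval_zero]
    rfl
  rw [((Ideal.quotientEquivAlgOfEq F hker).trans <| Ideal.quotientKerAlgEquivOfSurjective
    fun c => ⟨C c, by simp⟩).toLinearEquiv.finrank_eq, Module.finrank_self]

lemma le_order_coe_of_isHomogeneous {p : MvPolynomial σ A} {n : ℕ} (hp : p.IsHomogeneous n) :
    (n : ℕ∞) ≤ (p : MvPowerSeries σ A).order :=
  MvPowerSeries.nat_le_order fun m hm => by
    rw [coeff_coe]
    exact hp.coeff_eq_zero hm.ne

lemma order_coe_le_totalDegree {p : MvPolynomial σ A} (hp : p ≠ 0) :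
    (p : MvPowerSeries σ A).order ≤ p.totalDegree := by
  obtain ⟨m, hm⟩ := ne_zero_iff.1 hp
  refine (MvPowerSeries.order_le (d := m) (by rwa [coeff_coe])).trans ?_
  exact Nat.cast_le.2 (le_totalDegree (mem_support_iff.2 hm))

lemma isUnit_of_dvd_of_isHomogeneous {d p : MvPolynomial σ F} {n : ℕ} (hp : p.IsHomogeneous n)
    (hp₀ : p ≠ 0) (hdp : d ∣ p) (hd : constantCoeff d ≠ 0) : IsUnit d := by
  obtain ⟨e, rfl⟩ := hdp
  have hd₀ : d ≠ 0 := left_ne_zero_of_mul hp₀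
  have he₀ : e ≠ 0 := right_ne_zero_of_mul hp₀
  have hdord : (d : MvPowerSeries σ F).order = 0 := by
    by_contra h
    have h := MvPowerSeries.order_ne_zero_iff_constCoeff_eq_zero.1 h
    exact hd (by rw [← h, ← MvPowerSeries.coeff_zero_eq_constantCoeff_apply, coeff_coe]; rfl)
  have hne : n ≤ e.totalDegree := Nat.cast_le.1 <| calc
    (n : ℕ∞) ≤ ((d * e : MvPolynomial σ F) : MvPowerSeries σ F).order :=
      le_order_coe_of_isHomogeneous hp
    _ = (e : MvPowerSeries σ F).order := by rw [coe_mul, MvPowerSeries.order_mul, hdord, zero_add]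
    _ ≤ e.totalDegree := order_coe_le_totalDegree he₀
  have hdeg := hp.totalDegree hp₀
  rw [totalDegree_mul_of_isDomain hd₀ he₀] at hdeg
  have hdC := totalDegree_eq_zero_iff_eq_C.1 (show d.totalDegree = 0 by omega)
  rw [hdC]
  exact (isUnit_iff_ne_zero.2 hd).map C

lemma isRelPrime_of_map {τ : Type*} {p q : MvPolynomial σ F} {n : ℕ} (hp : p.IsHomogeneous n)
    (hp₀ : p ≠ 0) (φ : MvPolynomial σ F →ₐ[F] MvPolynomial τ F)
    (hφ : ∀ i, constantCoeff (φ (X i)) = 0) (h : IsRelPrime (φ p) (φ q)) : IsRelPrime p q := by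
  intro d hdp hdq
  have hφd : constantCoeff (φ d) = constantCoeff d := by
    have : (aeval 0 : MvPolynomial τ F →ₐ[F] F).comp φ = aeval 0 := by
      ext i
      simp [← hφ i]
    simpa using AlgHom.congr_fun this d
  refine isUnit_of_dvd_of_isHomogeneous hp hp₀ hdp ?_
  rw [← hφd]
  exact ((h (map_dvd φ hdp) (map_dvd φ hdq)).map constantCoeff).ne_zero

end Polynomial

section Klein

open Matrix

universe u

lemma isRelPrime_of_pow_mem_span_pair {S : Type*} [CommRing S] [DecompositionMonoid S] {p q y z : S}
    {n : ℕ} (hyz : IsRelPrime y z) (hy : y ^ n ∈ Ideal.span {p, q})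
    (hz : z ^ n ∈ Ideal.span {p, q}) : IsRelPrime p q := fun d hp hq =>
  have hd : Ideal.span {p, q} ≤ Ideal.span {d} :=
    Ideal.span_le.2 <|
      Set.pair_subset (Ideal.mem_span_singleton.2 hp) (Ideal.mem_span_singleton.2 hq)
  hyz.pow (Ideal.mem_span_singleton.1 (hd hy)) (Ideal.mem_span_singleton.1 (hd hz))

/-- The vector of partial derivatives of a polynomial, a column of a Jacobian matrix. -/
noncomputable def formalGradient {σ A : Type*} [CommRing A] (p : MvPolynomial σ A) :
    σ → MvPolynomial σ A :=
  fun i => pderiv i p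

variable (K : Type u) [Field K]

/-- The invariant `x³y + y³z + z³x` of degree `4` of the Klein group, over any field. -/
noncomputable def kleinQuartic : MvPolynomial (Fin 3) K :=
  X 0 ^ 3 * X 1 + X 1 ^ 3 * X 2 + X 2 ^ 3 * X 0

/-- The invariant `xy⁵ + x⁵z - 5x²y²z² + yz⁵` of degree `6` of the Klein group, over any field. -/
noncomputable def kleinSextic : MvPolynomial (Fin 3) K :=
  X 0 * X 1 ^ 5 + X 0 ^ 5 * X 2 - 5 * X 0 ^ 2 * X 1 ^ 2 * X 2 ^ 2 + X 1 * X 2 ^ 5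

/-- The vector of signed `2 × 2` minors of the Jacobian matrix of the two Klein invariants. -/
noncomputable def kleinMinors : Fin 3 → MvPolynomial (Fin 3) K :=
  formalGradient (kleinQuartic K) ⨯₃ formalGradient (kleinSextic K)

lemma gradient_kleinQuartic (i : Fin 3) :
    formalGradient (kleinQuartic K) i = 3 * X i ^ 2 * X (i + 1) + X (i + 2) ^ 3 := by
  fin_cases i <;> simp [formalGradient, kleinQuartic, pderiv_X] <;> ring

lemma gradient_kleinSextic (i : Fin 3) :
    formalGradient (kleinSextic K) i =
      X (i + 1) ^ 5 + 5 * X i ^ 4 * X (i + 2) - 10 * X i * X (i + 1) ^ 2 * X (i + 2) ^ 2 := by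
  have h5 (j : Fin 3) : pderiv j (5 : MvPolynomial (Fin 3) K) = 0 := pderiv_C (a := (5 : K))
  fin_cases i <;> simp [formalGradient, kleinSextic, pderiv_X, h5] <;> ring

lemma kleinMinors_apply (i : Fin 3) :
    kleinMinors K i =
      formalGradient (kleinQuartic K) (i + 1) * formalGradient (kleinSextic K) (i + 2) -
        formalGradient (kleinQuartic K) (i + 2) * formalGradient (kleinSextic K) (i + 1) := by
  fin_cases i <;> rfl

lemma isHomogeneous_kleinQuartic : (kleinQuartic K).IsHomogeneous 4 :=
  ((((isHomogeneous_X K 0).pow 3).mul (isHomogeneous_X K 1)).add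
    (((isHomogeneous_X K 1).pow 3).mul (isHomogeneous_X K 2))).add
    (((isHomogeneous_X K 2).pow 3).mul (isHomogeneous_X K 0))

lemma isHomogeneous_kleinSextic : (kleinSextic K).IsHomogeneous 6 :=
  ((((isHomogeneous_X K 0).mul ((isHomogeneous_X K 1).pow 5)).add
    (((isHomogeneous_X K 0).pow 5).mul (isHomogeneous_X K 2))).sub
    ((((isHomogeneous_C (Fin 3) (5 : K)).mul ((isHomogeneous_X K 0).pow 2)).mul
      ((isHomogeneous_X K 1).pow 2)).mul ((isHomogeneous_X K 2).pow 2))).add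
    ((isHomogeneous_X K 1).mul ((isHomogeneous_X K 2).pow 5))

lemma isHomogeneous_kleinMinors (i : Fin 3) : (kleinMinors K i).IsHomogeneous 8 := by
  have ha (j : Fin 3) : (formalGradient (kleinQuartic K) j).IsHomogeneous 3 :=
    (isHomogeneous_kleinQuartic K).pderiv
  have hb (j : Fin 3) : (formalGradient (kleinSextic K) j).IsHomogeneous 5 :=
    (isHomogeneous_kleinSextic K).pderiv
  rw [kleinMinors_apply]
  exact ((ha _).mul (hb _)).sub ((ha _).mul (hb _))

lemma kleinMinors_ne_zero (i : Fin 3) : kleinMinors K i ≠ 0 := by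
  intro h
  have h1 := congrArg (MvPolynomial.eval (Pi.single i 1)) h
  fin_cases i <;> simp [kleinMinors_apply, gradient_kleinQuartic, gradient_kleinSextic] at h1

variable {K}

/-- The substitution of `0` for the variable `i`. -/
noncomputable def substZero (i : Fin 3) : MvPolynomial (Fin 3) K →ₐ[K] MvPolynomial (Fin 3) K :=
  aeval (Function.update X i 0)

lemma isRelPrime_X_X {σ : Type*} {i j : σ} (h : i ≠ j) :
    IsRelPrime (X i : MvPolynomial σ K) (X j) :=
  X_prime.irreducible.isRelPrime_iff_not_dvd.2 (by simpa using h)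

lemma substZero_X (i j : Fin 3) :
    substZero i (X j : MvPolynomial (Fin 3) K) = if j = i then 0 else X j := by
  simp [substZero, Function.update_apply]

lemma constantCoeff_substZero_X (i j : Fin 3) :
    constantCoeff (substZero i (X j : MvPolynomial (Fin 3) K)) = 0 := by
  by_cases h : j = i <;> simp [substZero_X, h]

lemma isUnit_ofNat_of_ne_zero {σ : Type*} (n : ℕ) [n.AtLeastTwo]
    (hn : (OfNat.ofNat n : K) ≠ 0) : IsUnit (OfNat.ofNat n : MvPolynomial σ K) := by
  simpa only [map_ofNat] using (isUnit_iff_ne_zero.2 hn).map (C : K →+* MvPolynomial σ K)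

lemma isRelPrime_of_isUnit_fourteen {S : Type*} [CommRing S] [DecompositionMonoid S] {y z : S}
    (h14 : IsUnit (14 : S)) (hyz : IsRelPrime y z) :
    IsRelPrime (y ^ 8 - 5 * y * z ^ 7) (z ^ 8 - 3 * y ^ 7 * z) := by
  refine isRelPrime_of_pow_mem_span_pair (n := 15) hyz ?_ ?_ <;>
    rw [← Ideal.unit_mul_mem_iff_mem _ h14, Ideal.mem_span_pair]
  · exact ⟨14 * y ^ 7 - 5 * z ^ 7, -(25 * z ^ 6 * y), by ring⟩
  · exact ⟨-(9 * z * y ^ 6), 14 * z ^ 7 - 3 * y ^ 7, by ring⟩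

lemma isRelPrime_kleinMinors (h14 : (14 : K) ≠ 0) (i : Fin 3) :
    IsRelPrime (kleinMinors K (i + 1)) (kleinMinors K (i + 2)) := by
  refine isRelPrime_of_map (isHomogeneous_kleinMinors K _) (kleinMinors_ne_zero K _) (substZero i)
    (constantCoeff_substZero_X i) ?_
  have h3 : substZero i (3 : MvPolynomial (Fin 3) K) = 3 := map_ofNat _ 3
  have h5 : substZero i (5 : MvPolynomial (Fin 3) K) = 5 := map_ofNat _ 5
  convert isRelPrime_of_isUnit_fourteen (isUnit_ofNat_of_ne_zero 14 h14)
    (isRelPrime_X_X (K := K) (show i + 1 ≠ i + 2 by simp)) using 1 <;>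
  fin_cases i <;>
    simp_all [kleinMinors_apply, gradient_kleinQuartic, gradient_kleinSextic, substZero_X] <;> ring

variable (K) in
lemma gradient_kleinQuartic_ne_zero (i : Fin 3) : formalGradient (kleinQuartic K) i ≠ 0 := by
  intro h
  have h1 := congrArg (MvPolynomial.eval (Pi.single (i + 2) 1)) h
  simp [gradient_kleinQuartic] at h1

variable (K) in
lemma isRelPrime_gradient_kleinQuartic (i : Fin 3) :
    IsRelPrime (formalGradient (kleinQuartic K) i) (formalGradient (kleinQuartic K) (i + 1)) := by
  refine isRelPrime_of_map (isHomogeneous_kleinQuartic K).pderiv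
    (gradient_kleinQuartic_ne_zero K i) (substZero (i + 1)) (constantCoeff_substZero_X _) ?_
  have h₀ : substZero (i + 1) (formalGradient (kleinQuartic K) i) = X (i + 2) ^ 3 := by
    fin_cases i <;> simp [gradient_kleinQuartic, substZero_X]
  have h₁ : substZero (i + 1) (formalGradient (kleinQuartic K) (i + 1)) = X i ^ 3 := by
    fin_cases i <;> simp [gradient_kleinQuartic, substZero_X]
  rw [h₀, h₁]
  exact (isRelPrime_X_X (by simp)).pow

lemma X_mem_of_gradient_kleinQuartic_mem (h14 : (14 : K) ≠ 0)
    {P : Ideal (MvPolynomial (Fin 3) K)} [hP : P.IsPrime]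
    (h : ∀ i, formalGradient (kleinQuartic K) i ∈ P) (i : Fin 3) : X i ∈ P := by
  simp only [gradient_kleinQuartic] at h
  have hstep (i : Fin 3) (hi : X i ∈ P) : X (i + 2) ∈ P :=
    hP.mem_of_pow_mem 3 ((P.add_mem_iff_right (P.mul_mem_right _ (P.mul_mem_left _
      (P.pow_mem_of_mem hi 2 two_pos)))).1 (h i))
  have h28 : (28 : K) ≠ 0 := fun h =>
    h14 (pow_eq_zero_iff two_ne_zero |>.1 (by linear_combination 7 * h))
  have hprod : (X 0 * X 1 * X 2 : MvPolynomial (Fin 3) K) ∈ P := by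
    apply hP.mem_of_pow_mem 3
    rw [← Ideal.unit_mul_mem_iff_mem _ (isUnit_ofNat_of_ne_zero 28 h28)]
    convert P.add_mem (P.add_mem (P.mul_mem_left (X 0 ^ 3 * X 1 ^ 3) (h 0))
      (P.mul_mem_left (-(3 * X 0 ^ 2 * X 1) * X 1 ^ 3) (h 1)))
      (P.mul_mem_left (9 * X 0 ^ 2 * X 1 ^ 3 * X 2) (h 2)) using 1
    simp only [Fin.isValue, zero_add, Fin.reduceAdd]
    ring
  obtain ⟨j, hj⟩ : ∃ j : Fin 3, X j ∈ P := by
    simpa [hP.mul_mem_iff_mem_or_mem, Fin.exists_fin_succ, or_assoc] using hprod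
  obtain rfl | rfl | rfl : i = j ∨ i = j + 2 ∨ i = j + 2 + 2 := by
    clear hj hprod
    fin_cases i <;> fin_cases j <;> simp
  · exact hj
  · exact hstep _ hj
  · exact hstep _ (hstep _ hj)

lemma X_mem_radical_span_gradient_kleinQuartic (h14 : (14 : K) ≠ 0) (i : Fin 3) :
    X i ∈ (Ideal.span (Set.range (formalGradient (kleinQuartic K)))).radical := by
  rw [Ideal.radical_eq_sInf, Ideal.mem_sInf]
  rintro P ⟨hP, hPp⟩
  exact X_mem_of_gradient_kleinQuartic_mem h14 (fun j => hP (Ideal.subset_span ⟨j, rfl⟩)) i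

variable (K) in
/-- The ideal of the Klein configuration of points, over any field. -/
noncomputable def kleinConfigurationIdeal : Ideal (MvPolynomial (Fin 3) K) :=
  Ideal.span (Set.range (kleinMinors K))

theorem stmt16_general (h14 : (14 : K) ≠ 0) (n : ℕ) :
    torDim (MvPolynomial (Fin 3) K) K (MvPolynomial (Fin 3) K ⧸ kleinConfigurationIdeal K ^ 2)
      (MvPolynomial (Fin 3) K ⧸ idealOfVars (Fin 3) K) n = [1, 6, 6, 1].getD n 0 := by
  have ha (i : Fin 3) : formalGradient (kleinQuartic K) i ∈
      Module.annihilator _ (MvPolynomial (Fin 3) K ⧸ idealOfVars (Fin 3) K) := by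
    simp [Ideal.annihilator_quotient, mem_idealOfVars_iff, gradient_kleinQuartic]
  have hb (i : Fin 3) : formalGradient (kleinSextic K) i ∈
      Module.annihilator _ (MvPolynomial (Fin 3) K ⧸ idealOfVars (Fin 3) K) := by
    simp [Ideal.annihilator_quotient, mem_idealOfVars_iff, gradient_kleinSextic]
  have h := TernaryQuadratic.torDim_quotient_span_cross_sq K
    (kleinMinors_ne_zero K) (isRelPrime_kleinMinors h14) (gradient_kleinQuartic_ne_zero K 0)
    (isRelPrime_gradient_kleinQuartic K 0) (isRegular_map_X (List.nodup_finRange 3)) (by simp)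
    (by simpa using X_mem_radical_span_gradient_kleinQuartic h14) ha hb n
  rwa [finrank_quotient_idealOfVars, mul_one] at h

end Klein

lemma kleinIdeal_eq : kleinIdeal = kleinConfigurationIdeal K7 := by
  have h₀ : pderiv 1 f4 * pderiv 2 f6 - pderiv 1 f6 * pderiv 2 f4 = kleinMinors K7 0 := by
    rw [mul_comm (pderiv 1 f6)]
    exact (kleinMinors_apply K7 0).symm
  have h₁ : pderiv 0 f4 * pderiv 2 f6 - pderiv 0 f6 * pderiv 2 f4 = -kleinMinors K7 1 := by
    rw [← neg_sub, mul_comm (pderiv 0 f6)]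
    exact congrArg Neg.neg (kleinMinors_apply K7 1).symm
  have h₂ : pderiv 0 f4 * pderiv 1 f6 - pderiv 0 f6 * pderiv 1 f4 = kleinMinors K7 2 := by
    rw [mul_comm (pderiv 0 f6)]
    exact (kleinMinors_apply K7 2).symm
  have hrange : Set.range (kleinMinors K7) =
      {kleinMinors K7 2, kleinMinors K7 1, kleinMinors K7 0} := by
    ext p
    simp only [Set.mem_range, Fin.exists_fin_succ, Set.mem_insert_iff, Set.mem_singleton_iff]
    grind
  rw [kleinIdeal, kleinConfigurationIdeal, h₀, h₁, h₂, hrange]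
  simp only [Ideal.span_insert, Ideal.span_singleton_neg]

lemma m7_eq : m7 = idealOfVars (Fin 3) K7 := by
  rw [m7, idealOfVars]
  congr 1
  ext
  simp [Fin.exists_fin_succ, eq_comm]

lemma torDimK_eq (i : ℕ) : torDimK i = [1, 6, 6, 1].getD i 0 := by
  rw [← stmt16_general (K := K7) (by norm_num), ← kleinIdeal_eq, ← m7_eq]
  rfl

/-- The Betti numbers of `R/I²`: the `K`-dimensions of `Tor_i^R(R/I², k)`
for `i = 0,…,4` are `1, 6, 6, 1, 0`. -/
theorem stmt16 :
    torDimK 0 = 1 ∧ torDimK 1 = 6 ∧ torDimK 2 = 6 ∧ torDimK 3 = 1 ∧ torDimK 4 = 0 := by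
  simp [torDimK_eq]
end
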